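/- arXiv:1411.1660 — 2 statements merged into one kernel-verified Lean document; each statement's English description precedes it below -/
import Mathlib

section
/- Let M ≥ 0 be an integer and let f be a probability density on ℝ with ∫ θ^{2M+2} f(θ) dθ < ∞, so that its Fourier transform f*(ω) = ∫ e^{iωθ} f(θ) dθ is (2M+2) times continuously differentiable. Then ∫_ℝ |θ|^{2M+1} f(θ) dθ = (−1)^{M+1} (2/π) · lim_{T→∞} ∫_0^T ω^{−1} · (d^{2M+1}/dω^{2M+1}) Re f*(ω) dω, where the integrand extends continuously to ω = 0 (since the (2M+1)-st derivative of Re f* is an odd function vanishing at 0). -/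
open MeasureTheory Filter

/-- Fourier transform `t*(ω) = ∫ e^{iωx} t(x) dx` of a real-valued function. -/
noncomputable def ft (t : ℝ → ℝ) (ω : ℝ) : ℂ :=
  ∫ x : ℝ, Complex.exp (Complex.I * (ω : ℂ) * (x : ℂ)) * (t x : ℂ)

lemma aux_inner (T y : ℝ) :
    ∫ x in (0:ℝ)..T, Real.sin x * Real.exp (-x * y) =
      (1 + y^2)⁻¹ - Real.exp (-T*y) * (y * Real.sin T + Real.cos T) / (1 + y^2) := by
  have hy : (1 + y^2) ≠ 0 := by positivity
  have h : ∀ x ∈ Set.uIcc (0:ℝ) T, HasDerivAt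
      (fun x => -(Real.exp (-x*y) * (y * Real.sin x + Real.cos x) / (1 + y^2)))
      (Real.sin x * Real.exp (-x * y)) x := by
    intro x _
    have h1 : HasDerivAt (fun x : ℝ => Real.exp (-x*y)) (Real.exp (-x*y) * (-1 * y)) x :=
      (((hasDerivAt_id x).neg).mul_const y).exp
    have h2 : HasDerivAt (fun x : ℝ => y * Real.sin x + Real.cos x)
      (y * Real.cos x + -Real.sin x) x :=
      ((Real.hasDerivAt_sin x).const_mul y).add (Real.hasDerivAt_cos x)
    convert! ((h1.mul h2).div_const (1 + y^2)).neg using 1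
    field_simp
    ring
  rw [intervalIntegral.integral_eq_sub_of_hasDerivAt h
    (Continuous.intervalIntegrable (by fun_prop) _ _)]
  simp
  ring

lemma aux_outer {x : ℝ} (hx : 0 < x) :
    ∫ y in Set.Ioi (0:ℝ), Real.exp (-x * y) = x⁻¹ := by
  rw [integral_exp_mul_Ioi (by linarith)]
  simp [neg_div_neg_eq]

lemma aux_fub (T : ℝ) :
    Integrable (Function.uncurry fun x y : ℝ => Real.sin x * Real.exp (-x * y))
      ((volume.restrict (Set.Ioc 0 T)).prod (volume.restrict (Set.Ioi 0))) := by
  rw [integrable_prod_iff (Continuous.aestronglyMeasurable (by fun_prop))]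
  constructor
  · filter_upwards [ae_restrict_mem measurableSet_Ioc] with x hx
    have hx0 : -x < 0 := by linarith [hx.1]
    exact (integrableOn_exp_mul_Ioi hx0 0).const_mul (Real.sin x)
  · have : IntegrableOn (fun x => |Real.sinc x|) (Set.Ioc 0 T) :=
      (Real.continuous_sinc.abs.integrableOn_Icc (a := 0) (b := T)).mono_set Set.Ioc_subset_Icc_self
    refine this.congr ?_
    filter_upwards [ae_restrict_mem measurableSet_Ioc] with x hx
    have hx0 := hx.1
    simp only [Function.uncurry, norm_mul, Real.norm_eq_abs, Real.abs_exp]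
    rw [integral_const_mul, aux_outer hx0, Real.sinc_of_ne_zero hx0.ne', abs_div, abs_of_pos hx0]
    rfl

noncomputable def Si (T : ℝ) : ℝ := ∫ x in (0:ℝ)..T, Real.sinc x

lemma rem_bound {T y : ℝ} (hy : 0 < y) :
    ‖Real.exp (-T*y) * (y * Real.sin T + Real.cos T) / (1 + y^2)‖ ≤ 2 * Real.exp (-T*y) := by
  have hp : 0 < 1 + y^2 := by positivity
  rw [Real.norm_eq_abs, abs_div, abs_mul, Real.abs_exp, abs_of_pos hp, div_le_iff₀ hp]
  have h : |y * Real.sin T + Real.cos T| ≤ y + 1 := by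
    refine (abs_add_le _ _).trans (add_le_add ?_ (Real.abs_cos_le_one T))
    rw [abs_mul, abs_of_pos hy]
    exact mul_le_of_le_one_right hy.le (Real.abs_sin_le_one T)
  have := (Real.exp_pos (-T*y)).le
  calc _ ≤ Real.exp (-T*y) * (2 * (1+y^2)) := by
        gcongr
        nlinarith [sq_nonneg (y-1), sq_nonneg y]
    _ = _ := by ring

lemma Si_sub {T : ℝ} (hT : 0 < T) : |Si T - Real.pi / 2| ≤ 2 / T := by
  have h1 : Si T = ∫ x in Set.Ioc 0 T, ∫ y in Set.Ioi (0:ℝ), Real.sin x * Real.exp (-x * y) := by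
    rw [Si, intervalIntegral.integral_of_le hT.le]
    refine setIntegral_congr_fun measurableSet_Ioc fun x hx => ?_

    rw [integral_const_mul, aux_outer hx.1, Real.sinc_of_ne_zero hx.1.ne']
    rfl
  have hE := integrableOn_exp_mul_Ioi (a := -T) (by linarith) 0
  have hI : IntegrableOn (fun y => Real.exp (-T*y) * (y * Real.sin T + Real.cos T) / (1 + y^2))
      (Set.Ioi 0) := by
    refine Integrable.mono' (hE.const_mul 2) ?_ ?_
    · refine Continuous.aestronglyMeasurable ?_
      exact Continuous.div (by fun_prop) (by fun_prop) (fun y => by positivity)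
    · filter_upwards [ae_restrict_mem measurableSet_Ioi] with y hy using rem_bound hy
  have h2 : Si T = Real.pi / 2 - ∫ y in Set.Ioi (0:ℝ),
      Real.exp (-T*y) * (y * Real.sin T + Real.cos T) / (1 + y^2) := by
    rw [h1, integral_integral_swap (aux_fub T)]
    simp_rw [← intervalIntegral.integral_of_le hT.le, aux_inner]
    rw [integral_sub integrable_inv_one_add_sq.integrableOn hI, integral_Ioi_inv_one_add_sq]
    simp
  rw [h2, sub_sub_cancel_left, abs_neg, ← Real.norm_eq_abs]
  refine (norm_integral_le_of_norm_le (hE.const_mul 2) ?_).trans ?_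
  · filter_upwards [ae_restrict_mem measurableSet_Ioi] with y hy using rem_bound hy
  · rw [integral_const_mul, aux_outer hT]; rfl

lemma Si_neg (T : ℝ) : Si (-T) = - Si T := by
  have := intervalIntegral.integral_comp_neg (a := 0) (b := T) Real.sinc
  simp only [Real.sinc_neg, neg_zero] at this
  rw [Si, Si, this, intervalIntegral.integral_symm]

lemma Si_cont : Continuous Si :=
  intervalIntegral.continuous_primitive (fun a b => Real.continuous_sinc.intervalIntegrable a b) 0

lemma Si_bound_nonneg {T : ℝ} (hT : 0 ≤ T) : |Si T| ≤ 4 := by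
  rcases le_total T 1 with h | h
  · have := intervalIntegral.norm_integral_le_of_norm_le_const (a := 0) (b := T) (C := 1)
      (f := Real.sinc) (fun x _ => Real.abs_sinc_le_one x)
    rw [Real.norm_eq_abs, sub_zero, abs_of_nonneg hT] at this
    unfold Si
    linarith
  · have h0 : 0 < T := by linarith
    have h1 := Si_sub h0
    have h2 : 2 / T ≤ 2 := by rw [div_le_iff₀ h0]; linarith
    have := Real.pi_lt_four
    have := Real.pi_pos
    rw [abs_le] at *
    constructor <;> linarith

lemma Si_bound (T : ℝ) : |Si T| ≤ 4 := by
  rcases le_total 0 T with h | h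
  · exact Si_bound_nonneg h
  · have := Si_bound_nonneg (T := -T) (by linarith)
    rwa [Si_neg, abs_neg] at this

lemma Si_tendsto : Tendsto Si atTop (nhds (Real.pi / 2)) := by
  rw [tendsto_iff_norm_sub_tendsto_zero]
  refine squeeze_zero' (Eventually.of_forall fun _ => norm_nonneg _) ?_
    (tendsto_const_nhds.div_atTop tendsto_id : Tendsto (fun T : ℝ => 2 / T) atTop (nhds 0))
  filter_upwards [eventually_gt_atTop 0] with T hT using Si_sub hT

lemma Si_scale (T θ : ℝ) (hT : 0 ≤ T) :
    ∫ ω in Set.Ioc 0 T, Real.sin (ω * θ) / ω = Si (T * θ) := by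
  have h := intervalIntegral.mul_integral_comp_mul_right (a := 0) (b := T) (f := Real.sinc) θ
  rw [zero_mul] at h
  rw [Si, ← h, ← intervalIntegral.integral_const_mul, intervalIntegral.integral_of_le hT]
  refine setIntegral_congr_fun measurableSet_Ioc fun x hx => ?_
  have hx := hx.1.ne'
  by_cases hθ : θ = 0
  · simp [hθ]
  ·
    rw [Real.sinc_of_ne_zero (mul_ne_zero hx hθ)]
    field_simp

lemma Si_limit (n : ℕ) (hn : Odd n) (θ : ℝ) :
    Tendsto (fun T => θ ^ n * Si (T * θ)) atTop (nhds (Real.pi / 2 * |θ| ^ n)) := by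
  have hpos : ∀ θ : ℝ, 0 < θ → 
    Tendsto (fun T => θ ^ n * Si (T * θ)) atTop (nhds (Real.pi / 2 * θ ^ n)) := by
    intro θ h
    rw [mul_comm (Real.pi / 2)]
    exact (Si_tendsto.comp (tendsto_id.atTop_mul_const h)).const_mul _
  rcases lt_trichotomy θ 0 with h | h | h
  · have := hpos (-θ) (by linarith)
    rw [abs_of_neg h]
    refine this.congr fun T => ?_
    rw [hn.neg_pow, mul_neg, Si_neg]; ring
  · subst h
    simp [hn.pos.ne']
  · rw [abs_of_pos h]; exact hpos θ h

lemma main_limit (μ : Measure ℝ) [IsFiniteMeasure μ] (n : ℕ) (hn : Odd n)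
    (h1 : Integrable (fun θ : ℝ => |θ| ^ n) μ) (h2 : Integrable (fun θ : ℝ => |θ| ^ (n + 1)) μ) :
    Tendsto (fun T : ℝ => ∫ ω in Set.Ioc (0:ℝ) T, (∫ θ, θ ^ n * Real.sin (ω * θ) ∂μ) / ω)
      atTop (nhds (Real.pi / 2 * ∫ θ, |θ| ^ n ∂μ)) := by
  have key : ∀ T : ℝ, 0 ≤ T →
      ∫ ω in Set.Ioc (0:ℝ) T, (∫ θ, θ ^ n * Real.sin (ω * θ) ∂μ) / ω =
      ∫ θ, θ ^ n * Si (T * θ) ∂μ := by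
    intro T hT
    simp_rw [← integral_div]
    rw [integral_integral_swap]
    · congr 1
      ext θ
      rw [← Si_scale T θ hT, ← integral_const_mul]
      simp_rw [mul_div_assoc]
    · have hb : Integrable (fun p : ℝ × ℝ => (1:ℝ) * |p.2| ^ (n + 1))
          ((volume.restrict (Set.Ioc 0 T)).prod μ) :=
        Integrable.mul_prod (f := fun _ : ℝ => (1:ℝ)) (integrable_const _) h2
      refine hb.mono' ?_ ?_
      · refine Measurable.aestronglyMeasurable ?_
        unfold Function.uncurry
        fun_prop
      · refine Eventually.of_forall fun p => ?_
        obtain ⟨ω, θ⟩ := p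
        simp only [Function.uncurry, Real.norm_eq_abs, one_mul]
        rcases eq_or_ne ω 0 with h | h
        · simp [h]
        · have hω : 0 < |ω| := abs_pos.mpr h
          rw [abs_div, abs_mul, abs_pow, div_le_iff₀ hω]
          have := Real.abs_sin_le_abs (x := ω * θ)
          rw [abs_mul] at this
          calc _ ≤ |θ| ^ n * (|ω| * |θ|) := by gcongr
            _ = _ := by ring
  have lim : Tendsto (fun T : ℝ => ∫ θ, θ ^ n * Si (T * θ) ∂μ) atTop
      (nhds (∫ θ, Real.pi / 2 * |θ| ^ n ∂μ)) := by
    refine tendsto_integral_filter_of_dominated_convergence (fun θ => |θ| ^ n * 4) ?_ ?_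
      (h1.mul_const 4) ?_
    · refine Eventually.of_forall fun T => Continuous.aestronglyMeasurable ?_
      have := Si_cont
      fun_prop
    · refine Eventually.of_forall fun T => Eventually.of_forall fun θ => ?_
      rw [norm_mul, norm_pow, Real.norm_eq_abs, Real.norm_eq_abs]
      gcongr
      exact Si_bound _
    · exact Eventually.of_forall fun θ => Si_limit n hn θ
  rw [integral_const_mul] at lim
  refine lim.congr' ?_
  filter_upwards [eventually_ge_atTop 0] with T hT using (key T hT).symm

lemma iter_re (μ : Measure ℝ) [IsFiniteMeasure μ] (M : ℕ) 
    (hint : MemLp id ((2 * M + 1 : ℕ) : ENNReal) μ) (ω : ℝ) :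
    iteratedDeriv (2 * M + 1) (fun ω' : ℝ => (charFun μ ω').re) ω =
      (-1) ^ (M + 1) * ∫ θ, θ ^ (2 * M + 1) * Real.sin (ω * θ) ∂μ := by
  have h1 : iteratedDeriv (2 * M + 1) (fun ω' : ℝ => (charFun μ ω').re) ω =
      (iteratedDeriv (2 * M + 1) (charFun μ) ω).re := by
    have := Complex.reCLM.iteratedFDeriv_comp_left (x := ω)
      ((contDiff_charFun hint).contDiffAt) (i := 2 * M + 1) (by exact_mod_cast le_rfl)
    have h := congrArg (fun F => F fun _ => (1:ℝ)) this
    exact h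
  rw [h1, iteratedDeriv_charFun hint]
  have hI : Integrable (fun x : ℝ => (x:ℂ) ^ (2 * M + 1) * Complex.exp (ω * x * Complex.I)) μ := by
    have := hint.integrable_norm_pow'
    refine this.mono' (Continuous.aestronglyMeasurable (by fun_prop)) (Eventually.of_forall fun x => ?_)
    have : ‖Complex.exp (ω * x * Complex.I)‖ = 1 := by
      rw [← Complex.ofReal_mul, Complex.norm_exp_ofReal_mul_I]
    rw [norm_mul, this, norm_pow]
    simp
  have h2 : (∫ x : ℝ, (x:ℂ) ^ (2 * M + 1) * Complex.exp (ω * x * Complex.I) ∂μ).im =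
      ∫ θ, θ ^ (2 * M + 1) * Real.sin (ω * θ) ∂μ := by
    have := integral_im hI
    simp only [RCLike.im_eq_complex_im] at this
    rw [← this]
    congr 1
    ext x
    rw [← Complex.ofReal_pow, ← Complex.ofReal_mul, Complex.im_ofReal_mul,
      Complex.exp_ofReal_mul_I_im]
  rw [← h2, pow_succ, pow_mul, Complex.I_sq, mul_assoc]
  rw [show ((-1:ℂ) ^ M) = (((-1:ℝ) ^ M : ℝ) : ℂ) by push_cast; rfl, Complex.re_ofReal_mul,
    Complex.I_mul_re]
  ring

theorem stmt_9 (M : ℕ) (f : ℝ → ℝ)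
    (hf_nonneg : ∀ x, 0 ≤ f x) (hf_int : Integrable f) (hf_one : (∫ x, f x) = 1)
    (hmom : Integrable (fun θ : ℝ => θ ^ (2 * M + 2) * f θ)) :
    ContDiff ℝ ((2 * M + 2 : ℕ) : ℕ∞) (ft f) ∧
    (∀ ω : ℝ, iteratedDeriv (2 * M + 1) (fun ω' : ℝ => (ft f ω').re) (-ω) =
      -iteratedDeriv (2 * M + 1) (fun ω' : ℝ => (ft f ω').re) ω) ∧
    iteratedDeriv (2 * M + 1) (fun ω' : ℝ => (ft f ω').re) 0 = 0 ∧
    ∃ L : ℝ,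
      Tendsto
        (fun T : ℝ => ∫ ω in Set.Ioc (0 : ℝ) T,
          iteratedDeriv (2 * M + 1) (fun ω' : ℝ => (ft f ω').re) ω / ω)
        atTop (nhds L) ∧
      (∫ θ : ℝ, |θ| ^ (2 * M + 1) * f θ) = (-1 : ℝ) ^ (M + 1) * (2 / Real.pi) * L ∧
      ∃ c : ℝ,
        Tendsto
          (fun ω : ℝ => iteratedDeriv (2 * M + 1) (fun ω' : ℝ => (ft f ω').re) ω / ω)
          (nhdsWithin 0 (Set.Ioi 0)) (nhds c) := by
  let μ : Measure ℝ := volume.withDensity (fun x => ENNReal.ofReal (f x))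
  have : IsFiniteMeasure μ := isFiniteMeasure_withDensity_ofReal hf_int.2
  have hm : AEMeasurable (fun x => ENNReal.ofReal (f x)) volume :=
    hf_int.1.aemeasurable.ennreal_ofReal
  have hfin : ∀ᵐ x ∂(volume : Measure ℝ), ENNReal.ofReal (f x) < ⊤ :=
    Eventually.of_forall fun _ => ENNReal.ofReal_lt_top
  have hft : ft f = charFun μ := by
    ext ω
    rw [charFun_apply_real, integral_withDensity_eq_integral_toReal_smul₀ hm hfin, ft]
    congr 1
    ext x
    rw [ENNReal.toReal_ofReal (hf_nonneg x), Complex.real_smul, mul_comm]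
    congr 2
    ring
  have hmem2 : MemLp id ((2 * M + 2 : ℕ) : ENNReal) μ := by
    rw [← integrable_norm_rpow_iff aestronglyMeasurable_id
      (Nat.cast_ne_zero.mpr (by omega)) (ENNReal.natCast_ne_top _)]
    rw [integrable_withDensity_iff_integrable_smul₀' hm hfin]
    refine hmom.congr (Eventually.of_forall fun x => ?_)
    simp only [ENNReal.toReal_ofReal (hf_nonneg x), ENNReal.toReal_natCast, Real.rpow_natCast, id,
      Real.norm_eq_abs, smul_eq_mul]
    rw [Even.pow_abs ⟨M + 1, by ring⟩, mul_comm]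
  have hmem1 : MemLp id ((2 * M + 1 : ℕ) : ENNReal) μ :=
    hmem2.mono_exponent (by exact_mod_cast Nat.le_succ _)
  have hG := iter_re μ M hmem1
  have hC : ContDiff ℝ ((2 * M + 2 : ℕ) : ℕ∞) (ft f) := by
    rw [hft]; exact_mod_cast contDiff_charFun hmem2
  have habs : (∫ θ : ℝ, |θ| ^ (2 * M + 1) * f θ) = ∫ θ, |θ| ^ (2 * M + 1) ∂μ := by
    rw [integral_withDensity_eq_integral_toReal_smul₀ hm hfin]
    congr 1
    ext x
    rw [ENNReal.toReal_ofReal (hf_nonneg x), smul_eq_mul, mul_comm]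
  have h0 : iteratedDeriv (2 * M + 1) (fun ω' : ℝ => (ft f ω').re) 0 = 0 := by
    rw [hft, hG]; simp
  refine ⟨hC, ?_, h0, (-1) ^ (M + 1) * (Real.pi / 2 * ∫ θ, |θ| ^ (2 * M + 1) ∂μ), ?_, ?_, ?_⟩
  · intro ω
    rw [hft, hG, hG, ← mul_neg, ← integral_neg]
    simp
  · rw [hft]
    simp_rw [hG, mul_div_assoc, integral_const_mul]
    exact (main_limit μ (2 * M + 1) ⟨M, rfl⟩ hmem1.integrable_norm_pow'
      hmem2.integrable_norm_pow').const_mul _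
  · rw [habs]
    have : ((-1:ℝ) ^ (M + 1)) * (-1) ^ (M + 1) = 1 := by
      rw [← mul_pow]; simp
    have hp := Real.pi_ne_zero
    calc _ = (((-1:ℝ) ^ (M + 1)) * (-1) ^ (M + 1)) * ∫ θ, |θ| ^ (2 * M + 1) ∂μ := by
          rw [this, one_mul]
      _ = _ := by field_simp
  · have hR : ContDiff ℝ ((2 * M + 2 : ℕ) : ℕ∞) (fun ω' : ℝ => (ft f ω').re) :=
      Complex.reCLM.contDiff.comp hC
    have hd := (hR.differentiable_iteratedDeriv (2 * M + 1)
      (by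
        have : 2 * M + 1 < 2 * M + 2 := by omega
        exact WithTop.coe_lt_coe.mpr (Nat.cast_lt.mpr this))).differentiableAt (x := 0) |>.hasDerivAt
    refine ⟨_, ((hasDerivAt_iff_tendsto_slope.mp hd).mono_left
      (nhdsWithin_mono _ fun x hx => (ne_of_gt hx : x ≠ 0))).congr fun x => ?_⟩
    rw [slope_def_field, h0]; simp
end

section
/- In the sparse deconvolution model with μ_n = n^{ν−1} for some ν > 1/2, suppose: g is bounded above; |g*(ω)| ≤ C_{g2} (ω²+1)^{−α/2} exp(−γ|ω|^β) for all ω with C_{g2} > 0, α ≥ 0, γ > 0, β > 0; |φ*(ω)| ≥ C_{φ1} (ω²+1)^{−a/2} for all ω with C_{φ1} > 0, a ∈ ℝ; g* is differentiable with |(g*)'(ω)| ≤ C_g |g*(ω)| (1+|ω|)^τ for some τ ≥ 0; and there exists ω_0 > 0 such that ρ(ω) = arg(φ*(ω)) is twice continuously differentiable for |ω| > ω_0 with |ρ(ω)|, |ρ'(ω)|, |ρ''(ω)| ≤ ρ̄ < ∞. Then for all s ≥ 0, B > 0 there is a constant C > 0 (independent of n) such that, for all sufficiently large n, R_{n,μ_n}(Ω_s(B))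 = inf over measurable estimators T of (Y_1,…,Y_n) of sup over probability densities f₀ ∈ Ω_s(B) (with ∫ |f₀*(ω) φ*(ω)| dω < ∞) of E(T − Φ_μ)² satisfies R_{n,μ_n}(Ω_s(B)) ≥ C · (log n)^{−(2s+2a−1)/β}. -/
open MeasureTheory Finset

open scoped FourierTransform


theorem plancherel_ae (u : ℝ → ℂ) (h1 : Integrable u) (h2 : MemLp u 2) :
    𝓕 u =ᵐ[volume] ((𝓕 (h2.toLp u) : Lp (α := ℝ) ℂ 2) : ℝ → ℂ) := by
  have hcont : Continuous (𝓕 u) :=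
    VectorFourier.fourierIntegral_continuous Real.continuous_fourierChar
      (by exact continuous_inner) h1
  apply ae_eq_of_integral_contDiff_smul_eq hcont.locallyIntegrable
  · exact (Lp.memLp _).locallyIntegrable (by norm_num)
  · intro ψ hψ hψc
    have hc : HasCompactSupport (fun x => (ψ x : ℂ)) := hψc.comp_left (g := Complex.ofReal) (by simp)
    have hd : ContDiff ℝ (⊤ : ℕ∞) (fun x => (ψ x : ℂ)) := Complex.ofRealCLM.contDiff.comp hψ
    let S := hc.toSchwartzMap hd
    have hS : ∀ x, S x = (ψ x : ℂ) := fun x => rfl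
    have e := DFunLike.congr_fun (Lp.fourier_toTemperedDistribution_eq (E := ℝ) (F := ℂ) (h2.toLp u)) S
    simp only [TemperedDistribution.fourier_apply, Lp.toTemperedDistribution_apply] at e
    have e2 : ∫ x, ψ x • (((𝓕 (h2.toLp u) : Lp (α := ℝ) ℂ 2 volume) : ℝ → ℂ) x)
        = ∫ x, (𝓕 S) x • (h2.toLp u) x := by
      rw [e]; rfl
    rw [e2]
    have e3 : ∫ x, (𝓕 S) x • (h2.toLp u) x = ∫ x, (𝓕 (S : ℝ → ℂ)) x • u x := by
      apply integral_congr_ae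
      filter_upwards [h2.coeFn_toLp] with x hx
      rw [hx, SchwartzMap.fourier_coe]
    rw [e3]
    have := VectorFourier.integral_fourierIntegral_smul_eq_flip (e := Real.fourierChar)
      (L := innerₗ ℝ) (μ := volume) (ν := volume) (f := (S : ℝ → ℂ)) (g := u)
      Real.continuous_fourierChar (by exact continuous_inner) S.integrable h1
    rw [flip_innerₗ] at this
    exact this.symm

theorem plancherel (u : ℝ → ℂ) (h1 : Integrable u) (h2 : MemLp u 2) :
    MemLp (𝓕 u) 2 ∧ ∫ x, ‖𝓕 u x‖ ^ 2 = ∫ x, ‖u x‖ ^ 2 := by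
  have h := plancherel_ae u h1 h2
  have hm : MemLp (𝓕 u) 2 := (memLp_congr_ae h).2 (Lp.memLp _)
  refine ⟨hm, ?_⟩
  have e1 : eLpNorm (𝓕 u) 2 volume = eLpNorm u 2 volume := by
    rw [eLpNorm_congr_ae h, ← ENNReal.toReal_eq_toReal_iff' (Lp.memLp _).2.ne h2.2.ne]
    have := Lp.norm_fourier_eq (h2.toLp u)
    rwa [Lp.norm_def, Lp.norm_toLp] at this
  have k : ∀ v : ℝ → ℂ, MemLp v 2 → ∫ x, ‖v x‖ ^ 2 = (eLpNorm v 2 volume).toReal ^ 2 := by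
    intro v hv
    rw [hv.eLpNorm_eq_integral_rpow_norm (by norm_num) (by norm_num)]
    have h0 : 0 ≤ ∫ x, ‖v x‖ ^ 2 := by positivity
    rw [ENNReal.toReal_ofReal (by positivity)]
    simp only [ENNReal.toReal_ofNat, Real.rpow_ofNat]
    rw [← Real.rpow_natCast, ← Real.rpow_mul h0]
    norm_num
  rw [k _ hm, k _ h2, e1]

theorem l1_of_weighted (F : ℝ → ℂ) (hF : AEStronglyMeasurable F) (lam : ℝ) (hl : 0 < lam)
    (hi : Integrable (fun x => ‖F x‖ ^ 2 * (1 + (2 * Real.pi * x) ^ 2)))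
    (hb : ∫ x, ‖F x‖ ^ 2 * (1 + (2 * Real.pi * x) ^ 2) ≤ lam ^ 2) :
    Integrable F ∧ ∫ x, ‖F x‖ ≤ lam := by
  have hpi := Real.pi_pos
  have hw : Integrable (fun x : ℝ => (1 + (2 * Real.pi * x) ^ 2)⁻¹) :=
    (integrable_inv_one_add_sq).comp_mul_left' (by positivity)
  have hwi : ∫ x : ℝ, (1 + (2 * Real.pi * x) ^ 2)⁻¹ = 1 / 2 := by
    rw [Measure.integral_comp_mul_left (fun x : ℝ => (1 + x ^ 2)⁻¹) (2 * Real.pi),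
      integral_univ_inv_one_add_sq, abs_of_pos (by positivity)]
    simp only [smul_eq_mul]; field_simp
  have hG : Integrable (fun x : ℝ => (1 / 2) * (lam * (1 + (2 * Real.pi * x) ^ 2)⁻¹ +
      (‖F x‖ ^ 2 * (1 + (2 * Real.pi * x) ^ 2)) * lam⁻¹)) :=
    ((hw.const_mul lam).add (hi.mul_const _)).const_mul _
  have key : ∀ x, ‖F x‖ ≤ (1 / 2) * (lam * (1 + (2 * Real.pi * x) ^ 2)⁻¹ +
      (‖F x‖ ^ 2 * (1 + (2 * Real.pi * x) ^ 2)) * lam⁻¹) := by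
    intro x
    have hp : 0 < 1 + (2 * Real.pi * x) ^ 2 := by positivity
    generalize 1 + (2 * Real.pi * x) ^ 2 = w at hp
    generalize ‖F x‖ = y
    have : (1 / 2) * (lam * w⁻¹ + (y ^ 2 * w) * lam⁻¹) - y = (lam - y * w) ^ 2 / (2 * lam * w) := by
      field_simp; ring
    have h2 : 0 ≤ (lam - y * w) ^ 2 / (2 * lam * w) := by positivity
    linarith
  have hFi : Integrable F := hG.mono' hF (Filter.Eventually.of_forall key)
  refine ⟨hFi, (integral_mono hFi.norm hG key).trans ?_⟩
  rw [integral_const_mul, integral_add (hw.const_mul lam) (hi.mul_const _), integral_const_mul,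
    integral_mul_const, hwi]
  have : (∫ x, ‖F x‖ ^ 2 * (1 + (2 * Real.pi * x) ^ 2)) * lam⁻¹ ≤ lam := by
    rw [← div_eq_mul_inv, div_le_iff₀ hl]; nlinarith
  linarith

theorem bump_fourier (u u' : ℝ → ℂ) (M A A' : ℝ) (hM : 0 < M) (hA : 0 < A) (hA' : 0 ≤ A')
    (hd : ∀ x, HasDerivAt u (u' x) x) (h0 : ∀ x, x ∉ Set.Icc M (2 * M) → u x = 0)
    (hu : ∀ x, ‖u x‖ ≤ A) (hu' : ∀ x, ‖u' x‖ ≤ A') :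
    Integrable u ∧ Integrable (𝓕 u) ∧ ∫ x, ‖𝓕 u x‖ ≤ Real.sqrt M * (A + A') ∧
      Integrable (fun x => ‖𝓕 u x‖ ^ 2) ∧ ∫ x, ‖𝓕 u x‖ ^ 2 ≤ M * A ^ 2 := by
  have hderiv : deriv u = u' := funext fun x => (hd x).deriv
  have h0' : ∀ x, x ∉ Set.Icc M (2 * M) → u' x = 0 := by
    intro x hx
    have ho : IsOpen (Set.Icc M (2 * M))ᶜ := isClosed_Icc.isOpen_compl
    have : u =ᶠ[nhds x] fun _ => 0 := by
      filter_upwards [ho.mem_nhds hx] with y hy using h0 y hy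
    exact ((hasDerivAt_const x (0 : ℂ)).congr_of_eventuallyEq this).unique (hd x) |>.symm
  have hdiff : Differentiable ℝ u := fun x => (hd x).differentiableAt
  have mem : ∀ (v : ℝ → ℂ) (K : ℝ), (AEStronglyMeasurable v) → 
      (∀ x, x ∉ Set.Icc M (2 * M) → v x = 0) → (∀ x, ‖v x‖ ≤ K) → ∀ p, MemLp v p := by
    intro v K hm hz hk p
    have : MemLp ((Set.Icc M (2 * M)).indicator v) p := by
      rw [memLp_indicator_iff_restrict measurableSet_Icc]
      exact MemLp.of_bound hm.restrict K (Filter.Eventually.of_forall hk)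
    rwa [Set.indicator_eq_self.2 (fun x hx => by
      by_contra h; exact hx (hz x h))] at this
  have bd : ∀ (v : ℝ → ℂ) (K : ℝ), (∀ x, x ∉ Set.Icc M (2 * M) → v x = 0) → (∀ x, ‖v x‖ ≤ K) → 
      ∫ x, ‖v x‖ ^ 2 ≤ M * K ^ 2 := by
    intro v K hz hk
    have : ∀ x, ‖v x‖ ^ 2 ≤ (Set.Icc M (2 * M)).indicator (fun _ => K ^ 2) x := by
      intro x
      by_cases hx : x ∈ Set.Icc M (2 * M)
      · rw [Set.indicator_of_mem hx]; exact pow_le_pow_left₀ (norm_nonneg _) (hk x) 2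
      · rw [Set.indicator_of_notMem hx, hz x hx]; simp
    have h := integral_mono_of_nonneg (μ := volume) (Filter.Eventually.of_forall fun x => by positivity)
      ((integrable_indicator_iff measurableSet_Icc).2 (by simp)) (Filter.Eventually.of_forall this)
    refine h.trans (le_of_eq ?_)
    rw [integral_indicator measurableSet_Icc]
    simp
    left; rw [max_eq_left (by linarith)]; ring
  have hum : AEStronglyMeasurable u := hdiff.continuous.aestronglyMeasurable
  have hum' : AEStronglyMeasurable u' := by
    rw [← hderiv]; exact (stronglyMeasurable_deriv u).aestronglyMeasurable
  have i1 : Integrable u := memLp_one_iff_integrable.1 (mem u A hum h0 hu 1)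
  have i1' : Integrable u' := memLp_one_iff_integrable.1 (mem u' A' hum' h0' hu' 1)
  obtain ⟨m2, p2⟩ := plancherel u i1 (mem u A hum h0 hu 2)
  obtain ⟨m2', p2'⟩ := plancherel u' i1' (mem u' A' hum' h0' hu' 2)
  have sq : Integrable (fun x => ‖𝓕 u x‖ ^ 2) := m2.norm.integrable_sq
  have sq' : Integrable (fun x => ‖𝓕 u' x‖ ^ 2) := m2'.norm.integrable_sq
  have fd : ∀ x, ‖𝓕 u' x‖ ^ 2 = ‖𝓕 u x‖ ^ 2 * (2 * Real.pi * x) ^ 2 := by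
    intro x
    rw [← hderiv, Real.fourier_deriv i1 hdiff (by rwa [hderiv])]
    simp only [norm_smul, norm_mul, Complex.norm_I, Complex.norm_real, Complex.norm_ofNat]
    simp only [Real.norm_eq_abs, mul_pow, sq_abs]; ring
  have e : (fun x => ‖𝓕 u x‖ ^ 2 * (1 + (2 * Real.pi * x) ^ 2)) =
      fun x => ‖𝓕 u x‖ ^ 2 + ‖𝓕 u' x‖ ^ 2 := by
    funext x; rw [fd]; ring
  have key := l1_of_weighted (𝓕 u) m2.1 (Real.sqrt M * (A + A')) (by positivity)
    (by rw [e]; exact sq.add sq') (by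
      rw [e, integral_add sq sq', p2, p2', mul_pow, Real.sq_sqrt hM.le]
      have := bd u A h0 hu
      have := bd u' A' h0' hu'
      nlinarith [mul_nonneg hM.le (mul_nonneg hA.le hA')])
  exact ⟨i1, key.1, key.2, sq, p2 ▸ bd u A h0 hu⟩


theorem two_point (n : ℕ) (p q : ℝ → ℝ) (hp0 : ∀ x, 0 ≤ p x) (hq0 : ∀ x, 0 ≤ q x)
    (hp : Integrable p) (hq : Integrable q) (hp1 : ∫ x, p x = 1)
    (hpq : n * ∫ x, |p x - q x| ≤ 1 / 2) (T : (Fin n → ℝ) → ℂ) (hT : Measurable T) (a b : ℂ) :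
    ENNReal.ofReal (‖a - b‖ ^ 2 / 8) ≤
      ∫⁻ y : Fin n → ℝ, ENNReal.ofReal (‖T y - a‖ ^ 2 * ∏ i : Fin n, p (y i)) ∨
    ENNReal.ofReal (‖a - b‖ ^ 2 / 8) ≤
      ∫⁻ y : Fin n → ℝ, ENNReal.ofReal (‖T y - b‖ ^ 2 * ∏ i : Fin n, q (y i)) := by
  set r : ℝ → ℝ := fun x => min (p x) (q x) with hr
  have hri : Integrable r := hp.inf hq
  have hr0 : ∀ x, 0 ≤ r x := fun x => le_min (hp0 x) (hq0 x)
  set t := ∫ x, |p x - q x| with ht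
  have ht0 : 0 ≤ t := integral_nonneg fun x => abs_nonneg _
  have hd : Integrable (fun x => |p x - q x|) := (hp.sub hq).abs
  have h1 : 1 - t ≤ ∫ x, r x := by
    rw [← hp1, ht, ← integral_sub hp hd]
    apply integral_mono (hp.sub hd) hri
    intro x
    apply le_min
    · have := abs_nonneg (p x - q x); simp only [Pi.sub_apply]; linarith
    · have := le_abs_self (p x - q x); simp only [Pi.sub_apply]; linarith
  have h2 : 1 / 2 ≤ (∫ x, r x) ^ n := by
    rcases Nat.eq_zero_or_pos n with h | h
    · subst h; norm_num
    have hn : (1 : ℝ) ≤ n := by exact_mod_cast h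
    have ht1 : t ≤ 1 / 2 := by nlinarith
    calc (1 / 2 : ℝ) ≤ 1 + n * (-t) := by linarith
      _ ≤ (1 + (-t)) ^ n := one_add_mul_le_pow (by linarith) n
      _ ≤ _ := pow_le_pow_left₀ (by linarith) (by linarith) n
  have hR : Integrable (fun y : Fin n → ℝ => ∏ i : Fin n, r (y i)) :=
    Integrable.fintype_prod (f := fun _ => r) (fun _ => hri)
  have hRi : ∫ y : Fin n → ℝ, ∏ i : Fin n, r (y i) = (∫ x, r x) ^ n := by
    have := integral_fintype_prod_volume_eq_pow (ι := Fin n) r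
    simpa using this
  have hpm : AEMeasurable (fun y : Fin n → ℝ => ∏ i : Fin n, p (y i)) :=
    (Integrable.fintype_prod (f := fun _ => p) (fun _ : Fin n => hp)).aemeasurable
  have hsum : ENNReal.ofReal (‖a - b‖ ^ 2 / 4) ≤
      (∫⁻ y : Fin n → ℝ, ENNReal.ofReal (‖T y - a‖ ^ 2 * ∏ i : Fin n, p (y i))) +
      ∫⁻ y : Fin n → ℝ, ENNReal.ofReal (‖T y - b‖ ^ 2 * ∏ i : Fin n, q (y i)) := by
    rw [← lintegral_add_left']
    swap
    · exact ((((hT.sub_const a).norm.pow_const 2).aemeasurable).mul hpm).ennreal_ofReal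
    calc ENNReal.ofReal (‖a - b‖ ^ 2 / 4)
        ≤ ENNReal.ofReal (∫ y : Fin n → ℝ, ‖a - b‖ ^ 2 / 2 * ∏ i : Fin n, r (y i)) := by
          apply ENNReal.ofReal_le_ofReal
          rw [integral_const_mul, hRi]
          nlinarith [sq_nonneg ‖a - b‖]
      _ = ∫⁻ y : Fin n → ℝ, ENNReal.ofReal (‖a - b‖ ^ 2 / 2 * ∏ i : Fin n, r (y i)) := by
          rw [ofReal_integral_eq_lintegral_ofReal (hR.const_mul _)]
          exact Filter.Eventually.of_forall fun y =>
            mul_nonneg (by positivity) (prod_nonneg fun i _ => hr0 _)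
      _ ≤ _ := by
          apply lintegral_mono
          intro y
          have P0 : 0 ≤ ∏ i : Fin n, r (y i) := prod_nonneg fun i _ => hr0 _
          have Pp : ∏ i : Fin n, r (y i) ≤ ∏ i : Fin n, p (y i) :=
            prod_le_prod (fun i _ => hr0 _) (fun i _ => min_le_left _ _)
          have Pq : ∏ i : Fin n, r (y i) ≤ ∏ i : Fin n, q (y i) :=
            prod_le_prod (fun i _ => hr0 _) (fun i _ => min_le_right _ _)
          simp only
          rw [← ENNReal.ofReal_add (mul_nonneg (by positivity) (P0.trans Pp))
            (mul_nonneg (by positivity) (P0.trans Pq))]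
          apply ENNReal.ofReal_le_ofReal
          have tri : ‖a - b‖ ≤ ‖T y - a‖ + ‖T y - b‖ := by
            have := norm_sub_le (T y - b) (T y - a)
            rw [sub_sub_sub_cancel_left] at this
            linarith
          have h3 : ‖a - b‖ ^ 2 / 2 ≤ ‖T y - a‖ ^ 2 + ‖T y - b‖ ^ 2 := by
            nlinarith [norm_nonneg (a - b), sq_nonneg (‖T y - a‖ - ‖T y - b‖),
              norm_nonneg (T y - a), norm_nonneg (T y - b)]
          calc _ ≤ (‖T y - a‖ ^ 2 + ‖T y - b‖ ^ 2) * ∏ i : Fin n, r (y i) :=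
                mul_le_mul_of_nonneg_right h3 P0
            _ ≤ _ := by
                rw [add_mul]
                exact add_le_add (mul_le_mul_of_nonneg_left Pp (by positivity))
                  (mul_le_mul_of_nonneg_left Pq (by positivity))
  by_contra hcon
  push Not at hcon
  have := ENNReal.add_lt_add hcon.1 hcon.2
  rw [← ENNReal.ofReal_add (by positivity) (by positivity)] at this
  rw [show ‖a - b‖ ^ 2 / 8 + ‖a - b‖ ^ 2 / 8 = ‖a - b‖ ^ 2 / 4 by ring] at this
  exact absurd hsum (not_le.2 this)

theorem ft_eq (t : ℝ → ℝ) (ω : ℝ) :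
    ft t ω = 𝓕 (fun x => (t x : ℂ)) (-ω / (2 * Real.pi)) := by
  rw [Real.fourier_real_eq_integral_exp_smul, ft]
  congr 1; funext x
  rw [smul_eq_mul]
  congr 2
  have : (Real.pi : ℂ) ≠ 0 := by exact_mod_cast Real.pi_ne_zero
  push_cast; field_simp

theorem ft_integrand (t : ℝ → ℝ) (ht : Integrable t) (ω : ℝ) :
    Integrable (fun x : ℝ => Complex.exp (Complex.I * (ω : ℂ) * (x : ℂ)) * (t x : ℂ)) := by
  refine ht.ofReal.bdd_mul (c := 1) (Continuous.aestronglyMeasurable (by fun_prop)) ?_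
  refine Filter.Eventually.of_forall fun x => ?_
  rw [show Complex.I * (ω : ℂ) * (x : ℂ) = ((ω * x : ℝ) : ℂ) * Complex.I by push_cast; ring,
    Complex.norm_exp_ofReal_mul_I]

theorem ft_add (s t : ℝ → ℝ) (hs : Integrable s) (ht : Integrable t) (c : ℝ) (ω : ℝ) :
    ft (fun x => c * s x + t x) ω = c * ft s ω + ft t ω := by
  unfold ft
  rw [← integral_const_mul, ← integral_add ((ft_integrand s hs ω).const_mul _) (ft_integrand t ht ω)]
  congr 1; funext x; push_cast; ring

theorem ft_continuous (t : ℝ → ℝ) (ht : Integrable t) : Continuous (ft t) := by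
  have hcont : Continuous (𝓕 (fun x => (t x : ℂ))) :=
    VectorFourier.fourierIntegral_continuous Real.continuous_fourierChar
      (by exact continuous_inner) ht.ofReal
  have : ft t = fun ω => 𝓕 (fun x => (t x : ℂ)) (-ω / (2 * Real.pi)) := funext (ft_eq t)
  rw [this]; fun_prop

theorem ft_norm_le (t : ℝ → ℝ) (ω : ℝ) : ‖ft t ω‖ ≤ ∫ x, |t x| := by
  unfold ft
  refine (norm_integral_le_integral_norm _).trans (le_of_eq ?_)
  congr 1; funext x
  rw [norm_mul, show Complex.I * (ω : ℂ) * (x : ℂ) = ((ω * x : ℝ) : ℂ) * Complex.I by push_cast; ring,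
    Complex.norm_exp_ofReal_mul_I, one_mul, Complex.norm_real, Real.norm_eq_abs]

theorem ft_neg (t : ℝ → ℝ) (ω : ℝ) : ft t (-ω) = (starRingEnd ℂ) (ft t ω) := by
  unfold ft
  rw [← integral_conj]
  congr 1; funext x
  simp [← Complex.exp_conj]

theorem ft_sq_integral (t : ℝ → ℝ) (ht : Integrable t) (h2 : MemLp t 2) :
    Integrable (fun ω => ‖ft t ω‖ ^ 2) ∧ ∫ ω, ‖ft t ω‖ ^ 2 = 2 * Real.pi * ∫ x, t x ^ 2 := by
  have hpi := Real.pi_pos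
  obtain ⟨m, e⟩ := plancherel (fun x => (t x : ℂ)) ht.ofReal h2.ofReal
  have h : (fun ω => ‖ft t ω‖ ^ 2) =
     fun ω => (fun x => ‖𝓕 (fun x => (t x : ℂ)) x‖ ^ 2) ((-(2 * Real.pi)⁻¹) * ω) := by
    funext ω; rw [ft_eq]; congr 3; field_simp
  constructor
  · rw [h]
    exact (m.norm.integrable_sq).comp_mul_left' (by simp [Real.pi_ne_zero])
  · rw [h, Measure.integral_comp_mul_left (fun x => ‖𝓕 (fun x => (t x : ℂ)) x‖ ^ 2), e]
    simp [abs_of_pos hpi]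

theorem conv_facts (p w : ℝ → ℝ) (hp : Integrable p) (hw : Integrable w) :
    Integrable (fun x => ∫ θ, p (x - θ) * w θ) ∧
    (∫ x, ∫ θ, p (x - θ) * w θ) = (∫ x, p x) * ∫ x, w x ∧
    (∀ ω, ft (fun x => ∫ θ, p (x - θ) * w θ) ω = ft p ω * ft w ω) ∧
    ∀ᵐ x, Integrable (fun θ => p (x - θ) * w θ) := by
  have e : (fun x => ∫ θ, p (x - θ) * w θ) = 
      MeasureTheory.convolution w p (ContinuousLinearMap.mul ℝ ℝ) volume := by
    funext x; unfold MeasureTheory.convolution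
    congr 1; funext θ; simp [mul_comm]
  refine ⟨?_, ?_, ?_, ?_⟩
  · rw [e]; exact hw.integrable_convolution _ hp
  · rw [e, integral_convolution _ hw hp]; simp [mul_comm]
  · intro ω
    have hc := Real.fourier_mul_convolution_eq (R := ℂ) (f₁ := fun x => (w x : ℂ))
      (f₂ := fun x => (p x : ℂ)) hw.ofReal hp.ofReal (-ω / (2 * Real.pi))
    rw [ft_eq, ft_eq, ft_eq, mul_comm (𝓕 (fun x => (p x : ℂ)) _), ← hc]
    have e2 : (fun x => ((∫ θ, p (x - θ) * w θ : ℝ) : ℂ)) =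
        MeasureTheory.convolution (fun x => (w x : ℂ)) (fun x => (p x : ℂ))
          (ContinuousLinearMap.mul ℂ ℂ) volume := by
      funext x; unfold MeasureTheory.convolution
      refine (integral_complex_ofReal).symm.trans ?_
      congr 1; funext θ; simp [mul_comm]
    rw [e2]
  · have := hw.ae_convolution_exists (ContinuousLinearMap.mul ℝ ℝ) hp
    filter_upwards [this] with x hx
    refine Integrable.congr hx (Filter.Eventually.of_forall fun θ => ?_)
    simp [mul_comm]

theorem ft_gauss (v : NNReal) (hv : v ≠ 0) (ω : ℝ) :
    ft (ProbabilityTheory.gaussianPDFReal 0 v) ω = (Real.exp (-(v * ω ^ 2 / 2)) : ℝ) := by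
  have h := ProbabilityTheory.charFun_gaussianReal (μ := 0) (v := v) ω
  rw [charFun_apply_real, ProbabilityTheory.integral_gaussianReal_eq_integral_smul hv] at h
  unfold ft
  have e : ∀ x : ℝ, Complex.exp (Complex.I * (ω : ℂ) * (x : ℂ)) * 
    (ProbabilityTheory.gaussianPDFReal 0 v x : ℂ) = 
    ProbabilityTheory.gaussianPDFReal 0 v x • Complex.exp (↑ω * ↑x * Complex.I) := by
    intro x
    rw [Complex.real_smul, mul_comm]; congr 2; ring
  simp_rw [e, h]
  push_cast; simp

/-- Real part of the inverse Fourier transform. -/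
noncomputable def kk (u : ℝ → ℂ) (x : ℝ) : ℝ := (1 / Real.pi) * (𝓕 u (x / (2 * Real.pi))).re

theorem kk_facts (u : ℝ → ℂ) (h2 : Integrable (𝓕 u)) :
    Integrable (kk u) ∧ ∫ x, |kk u x| ≤ 2 * ∫ x, ‖𝓕 u x‖ := by
  have hpi := Real.pi_pos
  have i0 : Integrable (fun x => 𝓕 u (x / (2 * Real.pi))) := h2.comp_div (by positivity)
  have i1 : Integrable (kk u) := i0.re.const_mul _
  refine ⟨i1, ?_⟩
  calc ∫ x, |kk u x| ≤ ∫ x, (1 / Real.pi) * ‖𝓕 u (x / (2 * Real.pi))‖ := by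
        apply integral_mono i1.abs (i0.norm.const_mul _)
        intro x
        simp only [kk]
        rw [abs_mul, abs_of_pos (by positivity)]
        gcongr
        exact Complex.abs_re_le_norm _
    _ = _ := by
        rw [integral_const_mul, Measure.integral_comp_div (fun x => ‖𝓕 u x‖), abs_of_pos (by positivity)]
        simp only [smul_eq_mul]; field_simp

theorem kk_sq (u : ℝ → ℂ) (h1 : Continuous (𝓕 u)) (h2 : Integrable (fun x => ‖𝓕 u x‖ ^ 2)) :
    Integrable (fun x => kk u x ^ 2) ∧ ∫ x, kk u x ^ 2 ≤ (2 / Real.pi) * ∫ x, ‖𝓕 u x‖ ^ 2 := by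
  have hpi := Real.pi_pos
  have i0 : Integrable (fun x => (1 / Real.pi) ^ 2 * ‖𝓕 u (x / (2 * Real.pi))‖ ^ 2) :=
    (h2.comp_div (by positivity)).const_mul _
  have hb : ∀ x, kk u x ^ 2 ≤ (1 / Real.pi) ^ 2 * ‖𝓕 u (x / (2 * Real.pi))‖ ^ 2 := by
    intro x
    rw [kk, mul_pow]
    gcongr (1 / Real.pi) ^ 2 * ?_
    rw [← sq_abs]
    exact pow_le_pow_left₀ (abs_nonneg _) (Complex.abs_re_le_norm _) 2
  have hc : Continuous (kk u) := by unfold kk; fun_prop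
  have i1 : Integrable (fun x => kk u x ^ 2) := i0.mono' (by fun_prop) 
    (Filter.Eventually.of_forall fun x => by
      rw [Real.norm_eq_abs, abs_of_nonneg (by positivity)]; exact hb x)
  refine ⟨i1, (integral_mono i1 i0 hb).trans (le_of_eq ?_)⟩
  rw [integral_const_mul, Measure.integral_comp_div (fun x => ‖𝓕 u x‖ ^ 2), abs_of_pos (by positivity)]
  simp only [smul_eq_mul]; field_simp

theorem ft_kk (u : ℝ → ℂ) (hc : Continuous u) (h1 : Integrable u) (h2 : Integrable (𝓕 u)) (ω : ℝ) :
    ft (kk u) ω = u ω + (starRingEnd ℂ) (u (-ω)) := by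
  have hpi := Real.pi_pos
  have hpc : (Real.pi : ℂ) ≠ 0 := by exact_mod_cast Real.pi_ne_zero
  have inv : ∀ ξ : ℝ, ∫ x : ℝ, Complex.exp (Complex.I * (ξ : ℂ) * (x : ℂ)) * 𝓕 u (x / (2 * Real.pi))
      = 2 * Real.pi * u ξ := by
    intro ξ
    have := congrFun (hc.fourierInv_fourier_eq h1 h2) ξ
    rw [Real.fourierInv_eq'] at this
    rw [← this]
    have e : (fun x : ℝ => Complex.exp (Complex.I * (ξ : ℂ) * (x : ℂ)) * 𝓕 u (x / (2 * Real.pi)))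
       = fun x : ℝ => (fun v : ℝ => Complex.exp (↑(2 * Real.pi * (inner ℝ v ξ)) * Complex.I) • 𝓕 u v)
          (x / (2 * Real.pi)) := by
      funext x
      simp only [smul_eq_mul]
      congr 2
      simp; field_simp
    rw [e, Measure.integral_comp_div (fun v : ℝ => Complex.exp (↑(2 * Real.pi * (inner ℝ v ξ)) * Complex.I) • 𝓕 u v)]
    rw [abs_of_pos (by positivity), Complex.real_smul]; push_cast; rfl
  have i0 : Integrable (fun x => 𝓕 u (x / (2 * Real.pi))) := h2.comp_div (by positivity)
  have ii : ∀ ξ : ℝ, Integrable (fun x : ℝ => Complex.exp (Complex.I * (ξ : ℂ) * (x : ℂ)) * 𝓕 u (x / (2 * Real.pi))) := by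
    intro ξ
    refine i0.bdd_mul (c := 1) (Continuous.aestronglyMeasurable (by fun_prop)) ?_
    refine Filter.Eventually.of_forall fun x => ?_
    rw [show Complex.I * (ξ : ℂ) * (x : ℂ) = ((ξ * x : ℝ) : ℂ) * Complex.I by push_cast; ring,
      Complex.norm_exp_ofReal_mul_I]
  have e : ∀ x : ℝ, Complex.exp (Complex.I * (ω : ℂ) * (x : ℂ)) * (kk u x : ℂ) =
     (1 / (2 * Real.pi)) * (Complex.exp (Complex.I * (ω : ℂ) * (x : ℂ)) * 𝓕 u (x / (2 * Real.pi))) + 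
     (1 / (2 * Real.pi)) * (starRingEnd ℂ) 
      (Complex.exp (Complex.I * ((-ω : ℝ) : ℂ) * (x : ℂ)) * 𝓕 u (x / (2 * Real.pi))) := by
    intro x
    unfold kk
    push_cast
    rw [Complex.re_eq_add_conj, map_mul, ← Complex.exp_conj]
    simp only [map_mul, map_neg, Complex.conj_I, Complex.conj_ofReal]
    field_simp
  unfold ft
  simp_rw [e]
  rw [integral_add ((ii ω).const_mul _), integral_const_mul, integral_const_mul, integral_conj,
    inv, inv]
  · simp only [map_mul, Complex.conj_ofReal, Complex.conj_ofNat]; field_simp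
  · exact (((ii (-ω)).norm.mono' (by
      exact (Complex.continuous_conj.comp_aestronglyMeasurable (ii (-ω)).1)) (by simp))).const_mul _

theorem kk_conv (u : ℝ → ℂ) (h1 : Integrable u) (p : ℝ → ℝ) (hp : Integrable p) (x : ℝ)
    (h2 : Continuous (𝓕 u)) :
    ∫ θ, p (x - θ) * kk u θ = kk (fun ω => u ω * ft p ω) x := by
  have hpi := Real.pi_pos
  have hpc : (Real.pi : ℂ) ≠ 0 := by exact_mod_cast Real.pi_ne_zero
  have main : ∫ θ, (p (x - θ) : ℂ) * 𝓕 u (θ / (2 * Real.pi)) =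
      𝓕 (fun ω => u ω * ft p ω) (x / (2 * Real.pi)) := by
    have e : (fun θ : ℝ => (p (x - θ) : ℂ) * 𝓕 u (θ / (2 * Real.pi))) =
       fun θ => (fun η => 𝓕 u η • (p (x - 2 * Real.pi * η) : ℂ)) (θ / (2 * Real.pi)) := by
      funext θ
      simp only [smul_eq_mul]
      rw [mul_comm]; congr 4; field_simp
    rw [e, Measure.integral_comp_div (fun η => 𝓕 u η • (p (x - 2 * Real.pi * η) : ℂ))]
    have ip : Integrable (fun η : ℝ => (p (x - 2 * Real.pi * η) : ℂ)) := by
      have := (hp.comp_sub_left x).comp_mul_left' (R := 2 * Real.pi) (by positivity)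
      exact this.ofReal
    have := VectorFourier.integral_fourierIntegral_smul_eq_flip (e := Real.fourierChar)
      (L := innerₗ ℝ) (μ := volume) (ν := volume) (f := u) 
      (g := fun η : ℝ => (p (x - 2 * Real.pi * η) : ℂ))
      Real.continuous_fourierChar (by exact continuous_inner) h1 ip
    rw [flip_innerₗ] at this
    have this' : ∫ η, 𝓕 u η • (p (x - 2 * Real.pi * η) : ℂ) = 
      ∫ ω, u ω • 𝓕 (fun η : ℝ => (p (x - 2 * Real.pi * η) : ℂ)) ω := this
    rw [this', Real.fourier_real_eq_integral_exp_smul, ← integral_smul]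
    congr 1; funext ω
    rw [Real.fourier_real_eq_integral_exp_smul]
    have e2 : (fun η : ℝ => Complex.exp (↑(-2 * Real.pi * η * ω) * Complex.I) • (p (x - 2 * Real.pi * η) : ℂ)) 
       = fun η : ℝ => (fun y : ℝ => Complex.exp (↑(-ω * (x - (x - y))) * Complex.I) * (p (x - y) : ℂ)) 
          ((2 * Real.pi) * η) := by
      funext η
      simp only [smul_eq_mul]
      congr 3
      push_cast; ring
    rw [e2, Measure.integral_comp_mul_left (fun y : ℝ => Complex.exp (↑(-ω * (x - (x - y))) * Complex.I) * (p (x - y) : ℂ)),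
      integral_sub_left_eq_self (fun y : ℝ => Complex.exp (↑(-ω * (x - y)) * Complex.I) * (p y : ℂ)) volume x]
    have e3 : (fun y : ℝ => Complex.exp (↑(-ω * (x - y)) * Complex.I) * (p y : ℂ)) = fun y : ℝ =>
       Complex.exp (↑(-ω * x) * Complex.I) * (Complex.exp (Complex.I * ω * y) * (p y : ℂ)) := by
      funext y
      rw [← mul_assoc, ← Complex.exp_add]
      congr 2; push_cast; ring
    rw [e3, integral_const_mul, ← ft, abs_of_pos (by positivity), abs_of_pos (by positivity)]
    simp only [Complex.real_smul, smul_eq_mul]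
    have : (((-2 * Real.pi * ω * (x / (2 * Real.pi)) : ℝ)) : ℂ) = ((-ω * x : ℝ) : ℂ) := by
      congr 1; field_simp
    rw [this]
    push_cast
    field_simp
  have hb : ∀ y, ‖𝓕 u y‖ ≤ ∫ v, ‖u v‖ := fun y =>
    VectorFourier.norm_fourierIntegral_le_integral_norm _ _ _ _ _
  have hi : Integrable (fun θ : ℝ => (p (x - θ) : ℂ) * 𝓕 u (θ / (2 * Real.pi))) := by
    refine (hp.comp_sub_left x).ofReal.mul_bdd (c := ∫ v, ‖u v‖) 
      (Continuous.aestronglyMeasurable (by fun_prop)) (Filter.Eventually.of_forall fun θ => hb _)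
  rw [kk, ← main]
  have hre := integral_re hi
  simp only [RCLike.re_to_complex] at hre
  rw [← hre, ← integral_const_mul]
  congr 1; funext θ
  rw [kk, Complex.re_ofReal_mul]; ring

theorem weight_bound (s : ℝ) (hs : 0 ≤ s) :
    ∃ Cs : ℝ, 0 < Cs ∧ ∀ M ω : ℝ, 1 ≤ M →
      Real.exp (-(ω ^ 2 / M ^ 2)) * (ω ^ 2 + 1) ^ s ≤ Cs * M ^ (2 * s) := by
  refine ⟨(⌈s⌉₊).factorial * Real.exp 1, by positivity, fun M ω hM => ?_⟩
  have hM0 : 0 < M := by linarith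
  set t := 1 + ω ^ 2 / M ^ 2 with ht
  have ht1 : 1 ≤ t := by rw [ht]; have : 0 ≤ ω ^ 2 / M ^ 2 := by positivity
                         linarith
  have h1 : ω ^ 2 + 1 ≤ M ^ 2 * t := by
    rw [ht, mul_add, mul_div_cancel₀ _ (by positivity)]; nlinarith
  have h2 : (ω ^ 2 + 1) ^ s ≤ M ^ (2 * s) * t ^ s := by
    calc (ω ^ 2 + 1) ^ s ≤ (M ^ 2 * t) ^ s := Real.rpow_le_rpow (by positivity) h1 hs
      _ = _ := by
        rw [Real.mul_rpow (by positivity) (by positivity), Real.rpow_mul hM0.le]; norm_num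
  have h3 : t ^ s ≤ (⌈s⌉₊).factorial * Real.exp t := by
    have := Real.pow_div_factorial_le_exp t (by linarith) ⌈s⌉₊
    rw [div_le_iff₀ (by positivity)] at this
    calc t ^ s ≤ t ^ ((⌈s⌉₊ : ℕ) : ℝ) := Real.rpow_le_rpow_of_exponent_le ht1 (Nat.le_ceil s)
      _ = t ^ ⌈s⌉₊ := Real.rpow_natCast _ _
      _ ≤ _ := by linarith
  have h4 : Real.exp (-(ω ^ 2 / M ^ 2)) * Real.exp t = Real.exp 1 := by
    rw [← Real.exp_add]; congr 1; rw [ht]; ring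
  calc Real.exp (-(ω ^ 2 / M ^ 2)) * (ω ^ 2 + 1) ^ s
      ≤ Real.exp (-(ω ^ 2 / M ^ 2)) * (M ^ (2 * s) * ((⌈s⌉₊).factorial * Real.exp t)) := by
        gcongr; exact h2.trans (by gcongr)
    _ = ((⌈s⌉₊).factorial * (Real.exp (-(ω ^ 2 / M ^ 2)) * Real.exp t)) * M ^ (2 * s) := by ring
    _ = _ := by rw [h4]

theorem base_bound (s : ℝ) (hs : 0 ≤ s) (η : ℝ) (hη : 0 < η) :
    ∃ v : NNReal, v ≠ 0 ∧ Integrable (fun ω : ℝ => Real.exp (-(v * ω ^ 2)) * (ω ^ 2 + 1) ^ s) ∧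
      ∫ ω : ℝ, Real.exp (-(v * ω ^ 2)) * (ω ^ 2 + 1) ^ s ≤ η := by
  obtain ⟨Cs, hCs, hw⟩ := weight_bound s hs
  have hpi := Real.pi_pos
  set b : ℝ := Real.pi * (Cs / η) ^ 2 with hb
  have hb0 : 0 < b := by positivity
  refine ⟨⟨1 + b, by positivity⟩, ?_, ?_⟩
  · intro h; have h2 : (1 + b : ℝ) = 0 := congrArg NNReal.toReal h
    linarith
  have hi : Integrable (fun ω : ℝ => Cs * Real.exp (-b * ω ^ 2)) :=
    (integrable_exp_neg_mul_sq hb0).const_mul _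
  have hle : ∀ ω : ℝ, Real.exp (-((1 + b) * ω ^ 2)) * (ω ^ 2 + 1) ^ s ≤ Cs * Real.exp (-b * ω ^ 2) := by
    intro ω
    have := hw 1 ω le_rfl
    rw [Real.one_rpow, mul_one, one_pow, div_one] at this
    calc _ = (Real.exp (-ω ^ 2) * (ω ^ 2 + 1) ^ s) * Real.exp (-b * ω ^ 2) := by
          rw [mul_right_comm, ← Real.exp_add]; congr 2; ring
      _ ≤ _ := by gcongr
  have hi2 : Integrable (fun ω : ℝ => Real.exp (-((1 + b) * ω ^ 2)) * (ω ^ 2 + 1) ^ s) := by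
    refine hi.mono' ?_ (Filter.Eventually.of_forall fun ω => ?_)
    · exact (by fun_prop : Measurable _).aestronglyMeasurable
    · rw [Real.norm_eq_abs, abs_of_nonneg (by positivity)]; exact hle ω
  refine ⟨hi2, (integral_mono hi2 hi hle).trans ?_⟩
  rw [integral_const_mul, integral_gaussian, hb]
  rw [show Real.pi / (Real.pi * (Cs / η) ^ 2) = (η / Cs) ^ 2 by field_simp,
    Real.sqrt_sq (by positivity)]
  apply le_of_eq; field_simp

theorem dens (s B M Cs : ℝ) (hM : 1 ≤ M) (hCs : 0 < Cs)
    (hw : ∀ ω : ℝ, Real.exp (-(ω ^ 2 / M ^ 2)) * (ω ^ 2 + 1) ^ s ≤ Cs * M ^ (2 * s))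
    (v : NNReal) (hv : v ≠ 0)
    (hvi : Integrable (fun ω : ℝ => Real.exp (-(v * ω ^ 2)) * (ω ^ 2 + 1) ^ s))
    (hvb : ∫ ω : ℝ, Real.exp (-(v * ω ^ 2)) * (ω ^ 2 + 1) ^ s ≤ B ^ 2 / 4)
    (k : ℝ → ℝ) (hk : Integrable k) (hk2 : Integrable (fun x => k x ^ 2)) (hk0 : ∫ x, k x = 0)
    (hm : ∫ x, |k x| ≤ 1) (σ : ℝ) (hσ : σ = 1 ∨ σ = -1) (w : NNReal) (hwM : (w : ℝ) = (M ^ 2)⁻¹)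
    (f : ℝ → ℝ) (hf : f = fun x => (1 - ∫ x, |k x|) * ProbabilityTheory.gaussianPDFReal 0 v x +
      ∫ θ, ProbabilityTheory.gaussianPDFReal 0 w (x - θ) * (|k θ| + σ * k θ)) :
    (∀ x, 0 ≤ f x) ∧ Integrable f ∧ (∫ x, f x = 1) ∧
    (∀ ω, ft f ω = (1 - ∫ x, |k x| : ℝ) * ft (ProbabilityTheory.gaussianPDFReal 0 v) ω +
      Real.exp (-(ω ^ 2 / M ^ 2 / 2)) * (ft (fun x => |k x|) ω + σ * ft k ω)) ∧
    (∫ ω : ℝ, ‖ft f ω‖ ^ 2 * (ω ^ 2 + 1) ^ s) ≤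
      B ^ 2 / 2 + 16 * Real.pi * Cs * M ^ (2 * s) * ∫ x, k x ^ 2 ∧
    Integrable (fun ω => ‖ft f ω‖) := by
  have hpi := Real.pi_pos
  have hM0 : 0 < M := by linarith
  have hw0 : w ≠ 0 := by
    intro h; rw [h] at hwM; simp at hwM; have := pow_pos hM0 2; linarith
  have hσa : |σ| = 1 := by rcases hσ with h | h <;> simp [h]
  set m := ∫ x, |k x| with hmdef
  have hm0 : 0 ≤ m := integral_nonneg fun x => abs_nonneg _
  set W : ℝ → ℝ := fun x => |k x| + σ * k x with hW
  have hWi : Integrable W := hk.abs.add (hk.const_mul σ)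
  have hW0 : ∀ x, 0 ≤ W x := by
    intro x
    have h1 := neg_abs_le (k x)
    have h2 := le_abs_self (k x)
    rcases hσ with h | h <;> simp only [hW, h] <;> linarith
  have hWle : ∀ x, W x ^ 2 ≤ 4 * k x ^ 2 := by
    intro x
    have : |W x| ≤ 2 * |k x| := by
      simp only [hW]
      refine (abs_add_le _ _).trans ?_
      rw [abs_mul, hσa, abs_abs]; linarith
    have h3 := pow_le_pow_left₀ (abs_nonneg _) this 2
    rw [sq_abs, mul_pow, sq_abs] at h3; linarith
  have hW2 : Integrable (fun x => W x ^ 2) := by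
    refine (hk2.const_mul 4).mono' (hWi.1.pow 2) (Filter.Eventually.of_forall fun x => ?_)
    rw [Real.norm_eq_abs, abs_of_nonneg (by positivity)]; exact hWle x
  have hWm : MemLp W 2 := (memLp_two_iff_integrable_sq hWi.1).2 hW2
  have hW1 : ∫ x, W x = m := by
    simp only [hW]
    rw [integral_add hk.abs (hk.const_mul σ), integral_const_mul, hk0]; simp [hmdef]
  obtain ⟨c1, c2, c3, -⟩ := conv_facts (ProbabilityTheory.gaussianPDFReal 0 w) W
    (ProbabilityTheory.integrable_gaussianPDFReal 0 w) hWi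
  have hGi := ProbabilityTheory.integrable_gaussianPDFReal 0 v
  have hft : ∀ ω, ft f ω = (1 - m : ℝ) * ft (ProbabilityTheory.gaussianPDFReal 0 v) ω +
      Real.exp (-(ω ^ 2 / M ^ 2 / 2)) * ft W ω := by
    intro ω
    rw [hf, ft_add _ _ hGi c1, c3, ft_gauss w hw0]
    congr 4
    rw [hwM]; congr 1; ring
  have hftW : ∀ ω, ft W ω = ft (fun x => |k x|) ω + σ * ft k ω := by
    intro ω
    have := ft_add k (fun x => |k x|) hk hk.abs σ ω
    rw [add_comm, ← this]
    congr 1; funext x; simp only [hW]; ring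
  have hfi : Integrable f := by rw [hf]; exact (hGi.const_mul _).add c1
  obtain ⟨sq1, sq2⟩ := ft_sq_integral W hWi hWm
  have hWsq : ∫ ω, ‖ft W ω‖ ^ 2 ≤ 8 * Real.pi * ∫ x, k x ^ 2 := by
    rw [sq2]
    have : ∫ x, W x ^ 2 ≤ 4 * ∫ x, k x ^ 2 := by
      rw [← integral_const_mul]; exact integral_mono hW2 (hk2.const_mul 4) hWle
    nlinarith
  have hnorm : ∀ ω, ‖ft f ω‖ ≤ Real.exp (-(v * ω ^ 2 / 2)) + Real.exp (-(ω ^ 2 / M ^ 2 / 2)) * ‖ft W ω‖ := by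
    intro ω
    rw [hft, ft_gauss v hv]
    refine (norm_add_le _ _).trans ?_
    rw [norm_mul, norm_mul, Complex.norm_real, Complex.norm_real, Complex.norm_real,
      Real.norm_eq_abs, Real.norm_eq_abs, Real.norm_eq_abs, Real.abs_exp, Real.abs_exp,
      abs_of_nonneg (by linarith : 0 ≤ 1 - m)]
    have := Real.exp_pos (-(v * ω ^ 2 / 2))
    nlinarith
  have hcf : Continuous (ft f) := ft_continuous f hfi
  refine ⟨?_, hfi, ?_, ?_, ?_, ?_⟩
  · intro x
    rw [hf]
    exact add_nonneg (mul_nonneg (by linarith) (ProbabilityTheory.gaussianPDFReal_nonneg _ _ _))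
      (integral_nonneg fun θ => mul_nonneg (ProbabilityTheory.gaussianPDFReal_nonneg _ _ _) (hW0 θ))
  · rw [hf, integral_add (hGi.const_mul _) c1, c2, integral_const_mul, hW1,
      ProbabilityTheory.integral_gaussianPDFReal_eq_one 0 hv,
      ProbabilityTheory.integral_gaussianPDFReal_eq_one 0 hw0]; ring
  · intro ω; rw [hft, hftW]
  · have hi : Integrable (fun ω : ℝ => 2 * (Real.exp (-(v * ω ^ 2)) * (ω ^ 2 + 1) ^ s) +
        2 * Cs * M ^ (2 * s) * ‖ft W ω‖ ^ 2) := (hvi.const_mul 2).add (sq1.const_mul _)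
    have hle : ∀ ω : ℝ, ‖ft f ω‖ ^ 2 * (ω ^ 2 + 1) ^ s ≤ 
        2 * (Real.exp (-(v * ω ^ 2)) * (ω ^ 2 + 1) ^ s) + 2 * Cs * M ^ (2 * s) * ‖ft W ω‖ ^ 2 := by
      intro ω
      have h1 := pow_le_pow_left₀ (norm_nonneg _) (hnorm ω) 2
      have e1 : Real.exp (-(v * ω ^ 2)) = Real.exp (-(v * ω ^ 2 / 2)) ^ 2 := by
        rw [← Real.exp_nat_mul]; congr 1; push_cast; ring
      have e2 : Real.exp (-(ω ^ 2 / M ^ 2)) = Real.exp (-(ω ^ 2 / M ^ 2 / 2)) ^ 2 := by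
        rw [← Real.exp_nat_mul]; congr 1; push_cast; ring
      have h2 : ‖ft f ω‖ ^ 2 ≤ 2 * Real.exp (-(v * ω ^ 2)) + 2 * Real.exp (-(ω ^ 2 / M ^ 2)) * ‖ft W ω‖ ^ 2 := by
        rw [e1, e2]
        refine h1.trans ?_
        nlinarith [sq_nonneg (Real.exp (-(v * ω ^ 2 / 2)) - Real.exp (-(ω ^ 2 / M ^ 2 / 2)) * ‖ft W ω‖)]
      have h3 : 0 ≤ (ω ^ 2 + 1) ^ s := by positivity
      calc _ ≤ (2 * Real.exp (-(v * ω ^ 2)) + 2 * Real.exp (-(ω ^ 2 / M ^ 2)) * ‖ft W ω‖ ^ 2) * (ω ^ 2 + 1) ^ s := by gcongr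
        _ = 2 * (Real.exp (-(v * ω ^ 2)) * (ω ^ 2 + 1) ^ s) + 
            2 * (Real.exp (-(ω ^ 2 / M ^ 2)) * (ω ^ 2 + 1) ^ s) * ‖ft W ω‖ ^ 2 := by ring
        _ ≤ _ := by
          have := mul_le_mul_of_nonneg_right (hw ω) (sq_nonneg ‖ft W ω‖)
          linarith
    have h := integral_mono_of_nonneg (μ := volume) (Filter.Eventually.of_forall fun ω => by positivity) hi
      (Filter.Eventually.of_forall hle)
    refine h.trans ?_
    rw [integral_add (hvi.const_mul 2) (sq1.const_mul _), integral_const_mul, integral_const_mul]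
    have h5 := mul_le_mul_of_nonneg_left hWsq (by positivity : 0 ≤ 2 * Cs * M ^ (2 * s))
    linarith
  · have hb : ∀ ω, ‖ft W ω‖ ≤ ∫ x, |W x| := ft_norm_le W
    have hv0 : (0 : ℝ) < v / 2 := by positivity
    have hM2 : (0 : ℝ) < (M ^ 2)⁻¹ / 2 := by positivity
    refine ((integrable_exp_neg_mul_sq hv0).add
      ((integrable_exp_neg_mul_sq hM2).mul_const (∫ x, |W x|))).mono' (by fun_prop)
      (Filter.Eventually.of_forall fun ω => ?_)
    rw [norm_norm]
    refine (hnorm ω).trans ?_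
    simp only [Pi.add_apply]
    apply add_le_add
    · apply le_of_eq; congr 1; ring
    · refine mul_le_mul (le_of_eq ?_) (hb ω) (norm_nonneg _) (Real.exp_pos _).le
      congr 1; ring

theorem bump_exists (φ : ℝ → ℝ) (ω₀ ρbar : ℝ) (hω₀ : 0 < ω₀)
    (ρ ρ' : ℝ → ℝ)
    (hρ_arg : ∀ ω : ℝ, ω₀ < |ω| → ρ ω = (ft φ ω).arg)
    (hρ'deriv : ∀ ω : ℝ, ω₀ < |ω| → HasDerivAt ρ (ρ' ω) ω)
    (hρbdd : ∀ ω : ℝ, ω₀ < |ω| → |ρ' ω| ≤ ρbar) :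
    ∃ C1 : ℝ, 0 ≤ C1 ∧ ∀ M δ : ℝ, 1 ≤ M → ω₀ < M → 0 < δ →
      ∃ (u u' : ℝ → ℂ) (χ : ℝ → ℝ), (∀ x, HasDerivAt u (u' x) x) ∧
        (∀ x, x ∉ Set.Icc M (2 * M) → u x = 0) ∧ (∀ x, ‖u x‖ ≤ δ) ∧ (∀ x, ‖u' x‖ ≤ δ * C1) ∧
        (∀ x, 0 ≤ χ x) ∧ (∀ x, χ x ≤ 1) ∧ Continuous χ ∧ (∀ x ∈ Set.Icc (5 / 4 * M) (7 / 4 * M), χ x = 1) ∧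
        (∀ x, x ∉ Set.Icc M (2 * M) → χ x = 0) ∧
        ∀ x, u x * (starRingEnd ℂ) (ft φ x) = ((δ * χ x * ‖ft φ x‖ : ℝ) : ℂ) := by
  let b : ContDiffBump (3 / 2 : ℝ) := ⟨1 / 4, 1 / 2, by norm_num, by norm_num⟩
  have hbd : ContDiff ℝ 1 b := b.contDiff
  have hdc : Continuous (deriv b) := hbd.continuous_deriv le_rfl
  obtain ⟨Cb, hCb⟩ := hdc.bounded_above_of_compact_support b.hasCompactSupport.deriv
  have hCb0 : 0 ≤ Cb := (norm_nonneg _).trans (hCb 0)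
  have hρ0 : 0 ≤ ρbar := (abs_nonneg _).trans (hρbdd (ω₀ + 1) (by rw [abs_of_pos] <;> linarith))
  refine ⟨Cb + ρbar, by positivity, fun M δ hM hMω hδ => ?_⟩
  have hM0 : 0 < M := by linarith
  set χ : ℝ → ℝ := fun x => b (x / M) with hχ
  have hχ0 : ∀ x, x ∉ Set.Ioo M (2 * M) → χ x = 0 := by
    intro x hx
    apply b.zero_of_le_dist
    rw [Real.dist_eq]
    simp only [Set.mem_Ioo, not_and_or, not_lt] at hx
    change 1 / 2 ≤ _
    rcases hx with h | h
    · rw [abs_of_nonpos] <;> · have : x / M ≤ 1 := (div_le_one hM0).2 h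
                               linarith
    · have : 2 ≤ x / M := (le_div_iff₀ hM0).2 h
      rw [abs_of_nonneg] <;> linarith
  have hχd : ∀ x, HasDerivAt χ (deriv b (x / M) * (1 / M)) x := by
    intro x
    have h1 : HasDerivAt b (deriv b (x / M)) (x / M) :=
      (hbd.differentiable (by norm_num) _).hasDerivAt
    have h2 : HasDerivAt (fun y : ℝ => y / M) (1 / M) x := (hasDerivAt_id x).div_const M
    exact HasDerivAt.comp (h₂ := (b : ℝ → ℝ)) (h := fun y => y / M) x h1 h2
  have hχ1 : ∀ x, χ x ≤ 1 := fun x => b.le_one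
  have hχp : ∀ x, 0 ≤ χ x := fun x => b.nonneg
  have hχc : Continuous χ := by
    have := hbd.continuous
    simp only [hχ]; fun_prop
  refine ⟨fun x => δ * χ x * Complex.exp (ρ x * Complex.I),
    fun x => if ω₀ < x then δ * ((deriv b (x / M) * (1 / M) : ℝ) * Complex.exp (ρ x * Complex.I) +
      χ x * (Complex.exp (ρ x * Complex.I) * (ρ' x * Complex.I))) else 0, χ, ?_, ?_, ?_, ?_, hχp, hχ1, hχc, ?_, ?_, ?_⟩
  · intro x
    by_cases hx : ω₀ < x
    · simp only [hx, if_true]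
      have h1 := (hχd x).ofReal_comp
      have h2 : HasDerivAt (fun x => Complex.exp (ρ x * Complex.I))
          (Complex.exp (ρ x * Complex.I) * (ρ' x * Complex.I)) x :=
        ((hρ'deriv x (hx.trans_le (le_abs_self x))).ofReal_comp.mul_const Complex.I).cexp
      have h3 := (h1.mul h2).const_mul (δ : ℂ)
      refine h3.congr_of_eventuallyEq (Filter.Eventually.of_forall fun y => ?_)
      simp [mul_assoc]
    · simp only [hx, if_false]
      have : (fun x => δ * χ x * Complex.exp (ρ x * Complex.I)) =ᶠ[nhds x] fun _ => (0 : ℂ) := by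
        have : x < M := by linarith
        filter_upwards [Iio_mem_nhds this] with y hy
        rw [hχ0 y (fun h => absurd h.1 (not_lt.2 (le_of_lt hy)))]; simp
      exact (hasDerivAt_const x (0 : ℂ)).congr_of_eventuallyEq this
  · intro x hx
    simp only
    rw [hχ0 x (fun h => hx ⟨h.1.le, h.2.le⟩)]; simp
  · intro x
    rw [norm_mul, norm_mul, Complex.norm_exp_ofReal_mul_I, Complex.norm_real, Complex.norm_real,
      Real.norm_eq_abs, Real.norm_eq_abs, abs_of_pos hδ, abs_of_nonneg (hχp x)]
    nlinarith [hχ1 x]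
  · intro x
    by_cases hx : ω₀ < x
    · simp only [hx, if_true]
      rw [norm_mul, Complex.norm_real, Real.norm_eq_abs, abs_of_pos hδ]
      gcongr
      refine (norm_add_le _ _).trans ?_
      simp only [norm_mul, Complex.norm_exp_ofReal_mul_I, Complex.norm_real, Complex.norm_I,
        Real.norm_eq_abs, mul_one, one_mul, abs_mul]
      have h1 := hρbdd x (hx.trans_le (le_abs_self x))
      have h2 := hCb (x / M)
      rw [Real.norm_eq_abs] at h2
      have h3 : |1 / M| ≤ 1 := by
        rw [abs_of_pos (by positivity)]; exact (div_le_one hM0).2 hM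
      rw [abs_of_nonneg (hχp x)]
      apply add_le_add
      · nlinarith [abs_nonneg (deriv b (x / M)), abs_nonneg (1 / M)]
      · nlinarith [hχ1 x, hχp x, abs_nonneg (ρ' x)]
    · simp only [hx, if_false, norm_zero]; positivity
  · intro x hx
    apply b.one_of_mem_closedBall
    rw [Metric.mem_closedBall, Real.dist_eq]
    change _ ≤ 1 / 4
    have h1 : 5 / 4 ≤ x / M := (le_div_iff₀ hM0).2 hx.1
    have h2 : x / M ≤ 7 / 4 := (div_le_iff₀ hM0).2 hx.2
    rw [abs_le]; constructor <;> linarith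
  · intro x hx
    exact hχ0 x (fun h => hx ⟨h.1.le, h.2.le⟩)
  · intro x
    by_cases hx : ω₀ < x
    · have h1 := Complex.norm_mul_exp_arg_mul_I (ft φ x)
      rw [← hρ_arg x (hx.trans_le (le_abs_self x))] at h1
      conv_lhs => rw [← h1]
      rw [map_mul, Complex.conj_ofReal, ← Complex.exp_conj, map_mul, Complex.conj_ofReal,
        Complex.conj_I]
      have : Complex.exp (ρ x * Complex.I) * Complex.exp (ρ x * -Complex.I) = 1 := by
        rw [← Complex.exp_add]; simp
      push_cast
      linear_combination (δ * χ x * ‖ft φ x‖ : ℂ) * this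
    · simp only
      rw [hχ0 x (fun h => hx (hMω.trans h.1))]; simp

theorem diff_L1 (g Ψ G : ℝ → ℝ) (hg : Integrable g) (hΨ : Integrable Ψ) (m μ : ℝ) (hμ : 0 ≤ μ)
    (hμ1 : μ ≤ 1)
    (u : ℝ → ℂ) (hu : Integrable u) (hFu : Integrable (𝓕 u))
    (huΨ : Integrable (fun ω => u ω * ft Ψ ω))
    (hF : Integrable (𝓕 (fun ω => (u ω * ft Ψ ω) * ft g ω)))
    (f₁ f₂ : ℝ → ℝ) (hf₁ : Integrable f₁) (hf₂ : Integrable f₂)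
    (h₁ : f₁ = fun x => (1 - m) * G x + ∫ θ, Ψ (x - θ) * (|kk u θ| + 1 * kk u θ))
    (h₂ : f₂ = fun x => (1 - m) * G x + ∫ θ, Ψ (x - θ) * (|kk u θ| + (-1) * kk u θ)) :
    ∫ y, |((1 - μ) * g y + μ * ∫ θ, g (y - θ) * f₁ θ) - ((1 - μ) * g y + μ * ∫ θ, g (y - θ) * f₂ θ)|
      ≤ 4 * ∫ x, ‖𝓕 (fun ω => (u ω * ft Ψ ω) * ft g ω) x‖ := by
  have hc1 : Continuous (𝓕 u) :=
    VectorFourier.fourierIntegral_continuous Real.continuous_fourierChar (by exact continuous_inner) hu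
  have hc2 : Continuous (𝓕 (fun ω => u ω * ft Ψ ω)) :=
    VectorFourier.fourierIntegral_continuous Real.continuous_fourierChar (by exact continuous_inner) huΨ
  have hk := (kk_facts u hFu).1
  have a1 := (conv_facts Ψ _ hΨ hk).2.2.2
  have a2 := (conv_facts Ψ _ hΨ hk.abs).2.2.2
  have hd : ∀ᵐ x, f₁ x - f₂ x = 2 * kk (fun ω => u ω * ft Ψ ω) x := by
    filter_upwards [a1, a2] with x b1 b2
    rw [← kk_conv u hu Ψ hΨ x hc1, h₁, h₂]
    have e1 : ∫ θ, Ψ (x - θ) * (|kk u θ| + 1 * kk u θ) =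
        (∫ θ, Ψ (x - θ) * |kk u θ|) + ∫ θ, Ψ (x - θ) * kk u θ := by
      rw [← integral_add b2 b1]; congr 1; funext θ; ring
    have e2 : ∫ θ, Ψ (x - θ) * (|kk u θ| + (-1) * kk u θ) =
        (∫ θ, Ψ (x - θ) * |kk u θ|) - ∫ θ, Ψ (x - θ) * kk u θ := by
      rw [← integral_sub b2 b1]; congr 1; funext θ; ring
    simp only
    rw [e1, e2]; ring
  have a3 := (conv_facts g _ hg hf₁).2.2.2
  have a4 := (conv_facts g _ hg hf₂).2.2.2
  obtain ⟨K1, K2⟩ := kk_facts _ hF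
  have hq : ∀ᵐ y, |((1 - μ) * g y + μ * ∫ θ, g (y - θ) * f₁ θ) -
      ((1 - μ) * g y + μ * ∫ θ, g (y - θ) * f₂ θ)| =
      2 * μ * |kk (fun ω => (u ω * ft Ψ ω) * ft g ω) y| := by
    filter_upwards [a3, a4] with y b1 b2
    rw [← kk_conv _ huΨ g hg y hc2]
    have e1 : (∫ θ, g (y - θ) * f₁ θ) - ∫ θ, g (y - θ) * f₂ θ =
        2 * ∫ θ, g (y - θ) * kk (fun ω => u ω * ft Ψ ω) θ := by
      rw [← integral_sub b1 b2, ← integral_const_mul]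
      apply integral_congr_ae
      filter_upwards [hd] with θ hθ
      rw [← mul_sub, hθ]; ring
    have e2 : ∀ p q r : ℝ, p - q = 2 * r → |((1 - μ) * g y + μ * p) - ((1 - μ) * g y + μ * q)| = 2 * μ * |r| := by
      intro p q r h
      rw [show ((1 - μ) * g y + μ * p) - ((1 - μ) * g y + μ * q) = (2 * μ) * r by
        linear_combination μ * h, abs_mul, abs_of_nonneg (by positivity)]
    exact e2 _ _ _ e1
  rw [integral_congr_ae hq, integral_const_mul]
  have h0 : 0 ≤ ∫ x, ‖𝓕 (fun ω => (u ω * ft Ψ ω) * ft g ω) x‖ := integral_nonneg fun _ => norm_nonneg _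
  have h1 : 0 ≤ ∫ x, |kk (fun ω => (u ω * ft Ψ ω) * ft g ω) x| := integral_nonneg fun _ => abs_nonneg _
  nlinarith

theorem prod_bump (g : ℝ → ℝ) (Cg2 α γ β : ℝ) (hCg2 : 0 < Cg2) (hα : 0 ≤ α) (hγ : 0 < γ) (hβ : 0 < β)
    (hgup : ∀ ω : ℝ,
      ‖ft g ω‖ ≤ Cg2 * (ω ^ 2 + 1) ^ (-(α / 2)) * Real.exp (-γ * |ω| ^ β))
    (Cg τ : ℝ) (hτ : 0 ≤ τ) (gd : ℝ → ℂ)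
    (hgd : ∀ ω : ℝ, HasDerivAt (ft g) (gd ω) ω)
    (hgd_bdd : ∀ ω : ℝ, ‖gd ω‖ ≤ Cg * ‖ft g ω‖ * (1 + |ω|) ^ τ)
    (Ψ : ℝ → ℝ) (M δ C1 : ℝ) (hM : 1 ≤ M) (hδ : 0 < δ) (hC1 : 0 ≤ C1)
    (hΨ : ∀ ω, ft Ψ ω = (Real.exp (-(ω ^ 2 / M ^ 2 / 2)) : ℝ))
    (u u' : ℝ → ℂ) (hu : ∀ x, HasDerivAt u (u' x) x)
    (hu0 : ∀ x, x ∉ Set.Icc M (2 * M) → u x = 0) (hub : ∀ x, ‖u x‖ ≤ δ) (hub' : ∀ x, ‖u' x‖ ≤ δ * C1) :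
    Integrable (𝓕 (fun ω => (u ω * ft Ψ ω) * ft g ω)) ∧
    ∫ x, ‖𝓕 (fun ω => (u ω * ft Ψ ω) * ft g ω) x‖ ≤
      √M * (δ * Cg2 * Real.exp (-γ * M ^ β) * (3 + C1 + |Cg| * (1 + 2 * M) ^ τ)) := by
  have hM0 : 0 < M := by linarith
  set E := Cg2 * Real.exp (-γ * M ^ β) with hE
  have hE0 : 0 < E := by positivity
  have hgE : ∀ x ∈ Set.Icc M (2 * M), ‖ft g x‖ ≤ E := by
    intro x hx
    refine (hgup x).trans ?_
    have h1 : (x ^ 2 + 1) ^ (-(α / 2)) ≤ 1 :=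
      Real.rpow_le_one_of_one_le_of_nonpos (by nlinarith [sq_nonneg x]) (by linarith)
    have h2 : Real.exp (-γ * |x| ^ β) ≤ Real.exp (-γ * M ^ β) := by
      apply Real.exp_le_exp.2
      have h3 : M ^ β ≤ |x| ^ β := Real.rpow_le_rpow hM0.le (hx.1.trans (le_abs_self x)) hβ.le
      nlinarith
    calc _ ≤ Cg2 * 1 * Real.exp (-γ * M ^ β) := by gcongr
      _ = E := by rw [hE]; ring
  have hΨd : ∀ x, HasDerivAt (ft Ψ) ((Real.exp (-(x ^ 2 / M ^ 2 / 2)) * (-(x / M ^ 2)) : ℝ) : ℂ) x := by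
    intro x
    have h1 : HasDerivAt (fun x : ℝ => Real.exp (-(x ^ 2 / M ^ 2 / 2)))
        (Real.exp (-(x ^ 2 / M ^ 2 / 2)) * (-(x / M ^ 2))) x := by
      have h0 : HasDerivAt (fun x : ℝ => -(x ^ 2 / M ^ 2 / 2)) (-(x / M ^ 2)) x := by
        have h2 := (((hasDerivAt_pow 2 x).div_const (M ^ 2)).div_const 2).neg
        refine h2.congr_deriv ?_
        push_cast; field_simp
      exact h0.exp
    have h3 := h1.ofReal_comp
    refine h3.congr_of_eventuallyEq (Filter.Eventually.of_forall fun y => hΨ y)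
  have hΨ1 : ∀ x, ‖ft Ψ x‖ ≤ 1 := by
    intro x
    rw [hΨ, Complex.norm_real, Real.norm_eq_abs, Real.abs_exp]
    apply Real.exp_le_one_iff.2
    have : 0 ≤ x ^ 2 / M ^ 2 / 2 := by positivity
    linarith
  set V' : ℝ → ℂ := fun x => (u' x * ft Ψ x + u x * ((Real.exp (-(x ^ 2 / M ^ 2 / 2)) * (-(x / M ^ 2)) : ℝ) : ℂ)) * ft g x
    + (u x * ft Ψ x) * gd x with hV'
  have hVd : ∀ x, HasDerivAt (fun ω => (u ω * ft Ψ ω) * ft g ω) (V' x) x := fun x =>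
    ((hu x).mul (hΨd x)).mul (hgd x)
  set A' := δ * E * (2 + C1 + |Cg| * (1 + 2 * M) ^ τ) with hA'
  have hA'0 : 0 ≤ A' := by positivity
  have hz : ∀ x, x ∉ Set.Icc M (2 * M) → u' x = 0 := by
    intro x hx
    have h1 : u =ᶠ[nhds x] fun _ => (0 : ℂ) := by
      filter_upwards [isClosed_Icc.isOpen_compl.mem_nhds hx] with y hy using hu0 y hy
    exact (hu x).unique ((hasDerivAt_const x (0 : ℂ)).congr_of_eventuallyEq h1)
  suffices hs : (∀ x, ‖(u x * ft Ψ x) * ft g x‖ ≤ δ * E) ∧ ∀ x, ‖V' x‖ ≤ A' by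
    obtain ⟨-, b2, b3, -, -⟩ := bump_fourier (fun ω => (u ω * ft Ψ ω) * ft g ω) V' M (δ * E) A' hM0
      (by positivity) hA'0 hVd (fun x hx => by simp [hu0 x hx]) hs.1 hs.2
    refine ⟨b2, b3.trans (le_of_eq ?_)⟩
    rw [hA', hE]; ring
  refine ⟨fun x => ?_, fun x => ?_⟩
  · by_cases hx : x ∈ Set.Icc M (2 * M)
    · rw [norm_mul, norm_mul]
      have := hub x; have h2 := hΨ1 x; have h3 := hgE x hx
      calc _ ≤ δ * 1 * E := by gcongr
        _ = _ := by ring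
    · simp only [hu0 x hx, zero_mul, norm_zero]; positivity
  · by_cases hx : x ∈ Set.Icc M (2 * M)
    · have i1 := hub x; have i2 := hΨ1 x; have i3 := hgE x hx; have i4 := hub' x
      have hx0 : 0 ≤ x := hM0.le.trans hx.1
      have i5 : ‖((Real.exp (-(x ^ 2 / M ^ 2 / 2)) * (-(x / M ^ 2)) : ℝ) : ℂ)‖ ≤ 2 := by
        rw [Complex.ofReal_mul, ← hΨ, norm_mul, Complex.norm_real, Real.norm_eq_abs, abs_neg,
          abs_of_nonneg (by positivity)]
        have : x / M ^ 2 ≤ 2 := by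
          rw [div_le_iff₀ (by positivity)]; nlinarith [hx.2]
        calc _ ≤ 1 * (2 : ℝ) := by gcongr
          _ = 2 := by ring
      have i6 : ‖gd x‖ ≤ |Cg| * E * (1 + 2 * M) ^ τ := by
        refine (hgd_bdd x).trans ?_
        have : (1 + |x|) ^ τ ≤ (1 + 2 * M) ^ τ := by
          apply Real.rpow_le_rpow (by positivity) _ hτ
          rw [abs_of_nonneg hx0]; linarith [hx.2]
        have h2 := le_abs_self Cg
        gcongr
      calc ‖V' x‖ ≤ (‖u' x‖ * ‖ft Ψ x‖ + ‖u x‖ * ‖((Real.exp (-(x ^ 2 / M ^ 2 / 2)) * (-(x / M ^ 2)) : ℝ) : ℂ)‖) * ‖ft g x‖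
            + ‖u x‖ * ‖ft Ψ x‖ * ‖gd x‖ := by
            simp only [hV']
            refine (norm_add_le _ _).trans ?_
            rw [norm_mul, norm_mul _ (gd x), norm_mul (u x) (ft Ψ x)]
            gcongr
            refine (norm_add_le _ _).trans ?_
            rw [norm_mul, norm_mul]
        _ ≤ (δ * C1 * 1 + δ * 2) * E + δ * 1 * (|Cg| * E * (1 + 2 * M) ^ τ) := by gcongr
        _ = A' := by rw [hA']; ring
    · simp only [hV', hz x hx, hu0 x hx, zero_mul, add_zero, norm_zero]; exact hA'0

theorem gap (φ : ℝ → ℝ) (hφ : Integrable φ) (Cφ1 a : ℝ) (hCφ1 : 0 < Cφ1)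
    (hφlow : ∀ ω : ℝ, Cφ1 * (ω ^ 2 + 1) ^ (-(a / 2)) ≤ ‖ft φ ω‖)
    (M δ : ℝ) (hM : 1 ≤ M) (hδ : 0 < δ) (u : ℝ → ℂ) (χ : ℝ → ℝ)
    (hχ0 : ∀ x, 0 ≤ χ x) (hχ1 : ∀ x, χ x ≤ 1) (hχc : Continuous χ)
    (hχ : ∀ x ∈ Set.Icc (5 / 4 * M) (7 / 4 * M), χ x = 1)
    (huχ : ∀ x, u x * (starRingEnd ℂ) (ft φ x) = ((δ * χ x * ‖ft φ x‖ : ℝ) : ℂ))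
    (F₁ F₂ : ℝ → ℂ)
    (hF₁ : Integrable (fun ω => F₁ ω * ft φ (-ω))) (hF₂ : Integrable (fun ω => F₂ ω * ft φ (-ω)))
    (hd : ∀ ω, F₁ ω - F₂ ω = 2 * (Real.exp (-(ω ^ 2 / M ^ 2 / 2)) * (u ω + (starRingEnd ℂ) (u (-ω))))) :
    (1 / Real.pi * Real.exp (-2) * Cφ1 * min 1 (5 ^ (-(a / 2)))) * (δ * M ^ (1 - a)) ≤
    ‖(1 / (2 * Real.pi) : ℂ) * (∫ ω, F₁ ω * ft φ (-ω)) - (1 / (2 * Real.pi) : ℂ) * ∫ ω, F₂ ω * ft φ (-ω)‖ := by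
  have hM0 : 0 < M := by linarith
  have hpi := Real.pi_pos
  have hc := ft_continuous φ hφ
  set r : ℝ → ℝ := fun ω => 2 * (Real.exp (-(ω ^ 2 / M ^ 2 / 2)) * (δ * χ ω * ‖ft φ ω‖)) with hr
  have hr0 : ∀ ω, 0 ≤ r ω := by
    intro ω; have := hχ0 ω; simp only [hr]; positivity
  have hri : Integrable r := by
    have hM2 : (0 : ℝ) < (M ^ 2)⁻¹ / 2 := by positivity
    refine ((integrable_exp_neg_mul_sq hM2).mul_const (2 * (δ * ∫ x, |φ x|))).mono'
      (by simp only [hr]; fun_prop) (Filter.Eventually.of_forall fun ω => ?_)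
    rw [Real.norm_eq_abs, abs_of_nonneg (hr0 ω)]
    have h1 := ft_norm_le φ ω
    have h2 := hχ1 ω
    have h3 := hχ0 ω
    calc r ω ≤ 2 * (Real.exp (-(ω ^ 2 / M ^ 2 / 2)) * (δ * 1 * ∫ x, |φ x|)) := by
          simp only [hr]; gcongr
      _ = 2 * (Real.exp (-((M ^ 2)⁻¹ / 2) * ω ^ 2) * (δ * 1 * ∫ x, |φ x|)) := by
          congr 3; ring
      _ = _ := by ring
  have hdiff : (∫ ω, F₁ ω * ft φ (-ω)) - ∫ ω, F₂ ω * ft φ (-ω) = ((2 * ∫ ω, r ω : ℝ) : ℂ) := by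
    rw [← integral_sub hF₁ hF₂]
    have e : ∀ ω, F₁ ω * ft φ (-ω) - F₂ ω * ft φ (-ω) = ((r ω + r (-ω) : ℝ) : ℂ) := by
      intro ω
      have h1 := huχ ω
      have h2 := congrArg (starRingEnd ℂ) (huχ (-ω))
      rw [map_mul, Complex.conj_conj, Complex.conj_ofReal] at h2
      rw [← sub_mul, hd]
      simp only [hr]
      rw [neg_sq]
      push_cast at h1 h2 ⊢
      have h3 := ft_neg φ ω
      rw [mul_assoc, mul_assoc, add_mul, h2, h3, h1]
      ring
    simp_rw [e]
    rw [integral_complex_ofReal]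
    congr 1
    rw [integral_add hri hri.comp_neg, integral_neg_eq_self r volume]; ring
  rw [← mul_sub, hdiff, norm_mul, Complex.norm_real, Real.norm_eq_abs,
    abs_of_nonneg (mul_nonneg zero_le_two (integral_nonneg hr0))]
  have hn : ‖(1 / (2 * Real.pi) : ℂ)‖ = 1 / (2 * Real.pi) := by
    rw [show (1 / (2 * Real.pi) : ℂ) = ((1 / (2 * Real.pi) : ℝ) : ℂ) by push_cast; ring, Complex.norm_real,
      Real.norm_eq_abs, abs_of_pos (by positivity)]
  rw [hn]
  set c := 2 * (Real.exp (-2) * (δ * 1 * (Cφ1 * (min 1 (5 ^ (-(a / 2))) * M ^ (-a))))) with hcdef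
  have hlow : ∀ ω ∈ Set.Icc (5 / 4 * M) (7 / 4 * M), c ≤ r ω := by
    intro ω hω
    have j1 : Real.exp (-2) ≤ Real.exp (-(ω ^ 2 / M ^ 2 / 2)) := by
      apply Real.exp_le_exp.2
      have : ω ^ 2 / M ^ 2 ≤ 4 := by
        rw [div_le_iff₀ (by positivity)]; nlinarith [hω.1, hω.2]
      linarith
    have k1 : M ^ 2 ≤ ω ^ 2 + 1 := by nlinarith [hω.1, hω.2]
    have k2 : ω ^ 2 + 1 ≤ 5 * M ^ 2 := by nlinarith [hω.1, hω.2]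
    have kM : (M ^ 2) ^ (-(a / 2)) = M ^ (-a) := by
      rw [← Real.rpow_natCast, ← Real.rpow_mul hM0.le]; congr 1; push_cast; ring
    have j2 : min 1 (5 ^ (-(a / 2))) * M ^ (-a) ≤ (ω ^ 2 + 1) ^ (-(a / 2)) := by
      have hMa : 0 < M ^ (-a) := Real.rpow_pos_of_pos hM0 _
      rcases le_total 0 a with h | h
      · have : (5 * M ^ 2) ^ (-(a / 2)) ≤ (ω ^ 2 + 1) ^ (-(a / 2)) :=
          Real.rpow_le_rpow_of_nonpos (by positivity) k2 (by linarith)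
        rw [Real.mul_rpow (by positivity) (by positivity), kM] at this
        exact (mul_le_mul_of_nonneg_right (min_le_right _ _) hMa.le).trans this
      · have : (M ^ 2) ^ (-(a / 2)) ≤ (ω ^ 2 + 1) ^ (-(a / 2)) :=
          Real.rpow_le_rpow (by positivity) k1 (by linarith)
        rw [kM] at this
        have h2 := mul_le_mul_of_nonneg_right (min_le_left 1 ((5:ℝ) ^ (-(a / 2)))) hMa.le
        linarith
    have j3 : Cφ1 * (min 1 (5 ^ (-(a / 2))) * M ^ (-a)) ≤ ‖ft φ ω‖ :=
      (mul_le_mul_of_nonneg_left j2 hCφ1.le).trans (hφlow ω)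
    simp only [hr, hcdef]
    rw [hχ ω hω]
    gcongr
  have hint : c * (M / 2) ≤ ∫ ω, r ω := by
    have h1 := setIntegral_mono_on (μ := volume) (s := Set.Icc (5 / 4 * M) (7 / 4 * M)) (f := fun _ => c)
      (integrableOn_const (by simp)) hri.integrableOn measurableSet_Icc hlow
    have h2 := setIntegral_le_integral (s := Set.Icc (5 / 4 * M) (7 / 4 * M)) hri (Filter.Eventually.of_forall hr0)
    rw [setIntegral_const, Real.volume_real_Icc_of_le (by linarith), smul_eq_mul] at h1
    refine le_trans (le_of_eq ?_) (h1.trans h2)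
    ring
  calc _ = 1 / (2 * Real.pi) * (2 * (c * (M / 2))) := by
        rw [hcdef, show (1 - a) = -a + 1 by ring, Real.rpow_add hM0, Real.rpow_one]; field_simp
    _ ≤ _ := by gcongr

theorem large_n (γ β ω₀ K D L τ : ℝ) (hγ : 0 < γ) (hβ : 0 < β) (hτ : 0 ≤ τ) (hK : 0 ≤ K) (hD : 0 ≤ D)
    (hL : 0 ≤ L) :
    ∃ N : ℕ, ∀ n : ℕ, N ≤ n → 2 ≤ n ∧ ∀ M : ℝ, M = (2 / γ * Real.log n) ^ (1 / β) →
      1 ≤ M ∧ ω₀ < M ∧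
      n * (4 * (√M * (K * Real.exp (-γ * M ^ β) * (D + L * (1 + 2 * M) ^ τ)))) ≤ 1 / 2 := by
  have hlog : Filter.Tendsto (fun n : ℕ => Real.log n) Filter.atTop Filter.atTop :=
    Real.tendsto_log_atTop.comp tendsto_natCast_atTop_atTop
  have hMt : Filter.Tendsto (fun n : ℕ => (2 / γ * Real.log n) ^ (1 / β)) Filter.atTop Filter.atTop :=
    (tendsto_rpow_atTop (by positivity)).comp (hlog.const_mul_atTop (by positivity))
  set p := (τ + 1 / 2) / β with hp
  set c := 4 * K * (D + L * 3 ^ τ) * (2 / γ) ^ p with hc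
  have hlo : Filter.Tendsto (fun n : ℕ => c * (Real.log n ^ p / (n : ℝ) ^ (1 : ℝ))) Filter.atTop (nhds 0) := by
    have h1 := (isLittleO_log_rpow_rpow_atTop p (zero_lt_one' ℝ)).tendsto_div_nhds_zero
    have h2 := h1.comp tendsto_natCast_atTop_atTop (α := ℕ)
    have h3 := h2.const_mul c
    rw [mul_zero] at h3
    exact h3
  have hev := ((hMt.eventually_ge_atTop 1).and (hMt.eventually_gt_atTop ω₀)).and
    ((hlo.eventually_le_const (by norm_num : (0 : ℝ) < 1 / 2)).and (Filter.eventually_ge_atTop 2))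
  obtain ⟨N, hN⟩ := Filter.eventually_atTop.1 hev
  refine ⟨N, fun n hn => ?_⟩
  obtain ⟨⟨h1, h2⟩, h3, h4⟩ := hN n hn
  refine ⟨h4, fun M hM => ?_⟩
  rw [← hM] at h1 h2
  refine ⟨h1, h2, le_trans ?_ h3⟩
  have hn0 : (0 : ℝ) < n := by positivity
  have hl0 : 0 ≤ Real.log n := Real.log_natCast_nonneg n
  have hM0 : 0 < M := by linarith
  have e1 : Real.exp (-γ * M ^ β) = 1 / ((n : ℝ) * n) := by
    rw [hM, ← Real.rpow_mul (by positivity), one_div_mul_cancel hβ.ne', Real.rpow_one,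
      show -γ * (2 / γ * Real.log n) = -(Real.log n + Real.log n) by field_simp; ring,
      Real.exp_neg, Real.exp_add, Real.exp_log hn0, one_div]
  have e2 : √M * M ^ τ = (2 / γ) ^ p * Real.log n ^ p := by
    rw [Real.sqrt_eq_rpow, ← Real.rpow_add hM0, hM, ← Real.rpow_mul (by positivity),
      ← Real.mul_rpow (by positivity) hl0]
    congr 1; rw [hp]; ring
  have hMτ : 1 ≤ M ^ τ := Real.one_le_rpow h1 hτ
  have e3 : D + L * (1 + 2 * M) ^ τ ≤ (D + L * 3 ^ τ) * M ^ τ := by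
    have h5 : (1 + 2 * M) ^ τ ≤ 3 ^ τ * M ^ τ := by
      rw [← Real.mul_rpow (by norm_num) hM0.le]
      exact Real.rpow_le_rpow (by positivity) (by linarith) hτ
    have h6 := mul_le_mul_of_nonneg_left h5 hL
    have h7 := mul_le_mul_of_nonneg_left hMτ hD
    linarith
  calc _ ≤ n * (4 * (√M * (K * Real.exp (-γ * M ^ β) * ((D + L * 3 ^ τ) * M ^ τ)))) := by gcongr
    _ = 4 * K * (D + L * 3 ^ τ) * (√M * M ^ τ) * (n * Real.exp (-γ * M ^ β)) := by ring
    _ = _ := by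
      rw [e1, e2, hc, Real.rpow_one]; field_simp

theorem q_facts (g f : ℝ → ℝ) (hg0 : ∀ x, 0 ≤ g x) (hg : Integrable g) (hg1 : ∫ x, g x = 1)
    (hf0 : ∀ x, 0 ≤ f x) (hf : Integrable f) (hf1 : ∫ x, f x = 1) (μ : ℝ) (h0 : 0 ≤ μ) (h1 : μ ≤ 1) :
    (∀ y, 0 ≤ (1 - μ) * g y + μ * ∫ θ, g (y - θ) * f θ) ∧
    Integrable (fun y => (1 - μ) * g y + μ * ∫ θ, g (y - θ) * f θ) ∧
    ∫ y, ((1 - μ) * g y + μ * ∫ θ, g (y - θ) * f θ) = 1 := by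
  obtain ⟨c1, c2, -, -⟩ := conv_facts g f hg hf
  refine ⟨fun y => ?_, (hg.const_mul _).add (c1.const_mul _), ?_⟩
  · exact add_nonneg (mul_nonneg (by linarith) (hg0 y))
      (mul_nonneg h0 (integral_nonneg fun θ => mul_nonneg (hg0 _) (hf0 _)))
  · rw [integral_add (hg.const_mul _) (c1.const_mul _), integral_const_mul, integral_const_mul, c2,
      hg1, hf1]; ring

theorem phi_integrable (φ : ℝ → ℝ) (h : ft φ 0 ≠ 0) : Integrable φ := by
  have h1 : Integrable (fun x : ℝ => Complex.exp (Complex.I * ((0 : ℝ) : ℂ) * (x : ℂ)) * (φ x : ℂ)) := by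
    by_contra hc
    exact h (integral_undef hc)
  simpa using h1.re

set_option maxHeartbeats 2000000 in
theorem stmt_14 (g φ : ℝ → ℝ) (ν : ℝ) (hν : 1 / 2 < ν) (hν1 : ν < 1)
    (hg_nonneg : ∀ x, 0 ≤ g x) (hg_int : Integrable g) (hg_one : (∫ x, g x) = 1)
    (hg_bdd : BddAbove (Set.range g))
    (Cg2 α γ β : ℝ) (hCg2 : 0 < Cg2) (hα : 0 ≤ α) (hγ : 0 < γ) (hβ : 0 < β)
    (hgup : ∀ ω : ℝ,
      ‖ft g ω‖ ≤ Cg2 * (ω ^ 2 + 1) ^ (-(α / 2)) * Real.exp (-γ * |ω| ^ β))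
    (Cφ1 a : ℝ) (hCφ1 : 0 < Cφ1)
    (hφlow : ∀ ω : ℝ, Cφ1 * (ω ^ 2 + 1) ^ (-(a / 2)) ≤ ‖ft φ ω‖)
    (Cg τ : ℝ) (hτ : 0 ≤ τ) (gd : ℝ → ℂ)
    (hgd : ∀ ω : ℝ, HasDerivAt (ft g) (gd ω) ω)
    (hgd_bdd : ∀ ω : ℝ, ‖gd ω‖ ≤ Cg * ‖ft g ω‖ * (1 + |ω|) ^ τ)
    (ω₀ ρbar : ℝ) (hω₀ : 0 < ω₀)
    (ρ ρ' ρ'' : ℝ → ℝ)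
    (hρ_arg : ∀ ω : ℝ, ω₀ < |ω| → ρ ω = (ft φ ω).arg)
    (hρ'deriv : ∀ ω : ℝ, ω₀ < |ω| → HasDerivAt ρ (ρ' ω) ω)
    (hρ''deriv : ∀ ω : ℝ, ω₀ < |ω| → HasDerivAt ρ' (ρ'' ω) ω)
    (hρ''cont : ContinuousOn ρ'' {ω : ℝ | ω₀ < |ω|})
    (hρbdd : ∀ ω : ℝ, ω₀ < |ω| → |ρ ω| ≤ ρbar ∧ |ρ' ω| ≤ ρbar ∧ |ρ'' ω| ≤ ρbar) :
    ∀ s B : ℝ, 0 ≤ s → 0 < B →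
      ∃ C : ℝ, 0 < C ∧ ∃ N : ℕ, ∀ n : ℕ, N ≤ n →
        ∀ T : (Fin n → ℝ) → ℂ, Measurable T →
          ∃ f₀ : ℝ → ℝ, (∀ x, 0 ≤ f₀ x) ∧ Integrable f₀ ∧ (∫ x, f₀ x) = 1 ∧
            (∫ ω : ℝ, ‖ft f₀ ω‖ ^ 2 * (ω ^ 2 + 1) ^ s) ≤ B ^ 2 ∧
            Integrable (fun ω : ℝ => ‖ft f₀ ω‖ * ‖ft φ ω‖) ∧
            ENNReal.ofReal (C * (Real.log n) ^ (-((2 * s + 2 * a - 1) / β))) ≤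
              ∫⁻ y : Fin n → ℝ,
                ENNReal.ofReal
                  (‖T y - (1 / (2 * Real.pi) : ℂ) * ∫ ω : ℝ, ft f₀ ω * ft φ (-ω)‖ ^ 2 *
                    ∏ i : Fin n,
                      ((1 - (n : ℝ) ^ (ν - 1)) * g (y i) +
                        (n : ℝ) ^ (ν - 1) * ∫ θ : ℝ, g (y i - θ) * f₀ θ)) := by
  have hφi : Integrable φ := by
    apply phi_integrable
    have h1 := hφlow 0
    intro h
    rw [h, norm_zero] at h1
    have : 0 < Cφ1 * ((0 : ℝ) ^ 2 + 1) ^ (-(a / 2)) := by positivity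
    linarith
  have hφc := ft_continuous φ hφi
  intro s B hs hB
  have hpi := Real.pi_pos
  obtain ⟨Cs, hCs, hw⟩ := weight_bound s hs
  obtain ⟨v, hv, hvi, hvb⟩ := base_bound s hs (B ^ 2 / 4) (by positivity)
  obtain ⟨C1, hC1, hbump⟩ := bump_exists φ ω₀ ρbar hω₀ ρ ρ' hρ_arg hρ'deriv (fun ω h => (hρbdd ω h).2.1)
  obtain ⟨ε, hε0, hε1, hε2, hε3⟩ : ∃ ε : ℝ, 0 < ε ∧ ε ≤ 1 ∧ 2 * ε * (1 + C1) ≤ 1 ∧ 64 * Cs * ε ^ 2 ≤ B ^ 2 := by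
    refine ⟨min (1 / (2 * (1 + C1))) (min 1 (B / (8 * √Cs))), by positivity, ?_, ?_, ?_⟩
    · exact (min_le_right _ _).trans (min_le_left _ _)
    · have := min_le_left (1 / (2 * (1 + C1))) (min 1 (B / (8 * √Cs)))
      rw [le_div_iff₀ (by positivity)] at this
      linarith
    · have h1 := (min_le_right (1 / (2 * (1 + C1))) (min 1 (B / (8 * √Cs)))).trans (min_le_right _ _)
      have h2 := pow_le_pow_left₀ (by positivity) h1 2
      have h3 := mul_le_mul_of_nonneg_left h2 (by positivity : 0 ≤ 64 * Cs)
      refine h3.trans (le_of_eq ?_)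
      rw [div_pow, mul_pow, Real.sq_sqrt hCs.le]; field_simp; norm_num
  obtain ⟨N, hN⟩ := large_n γ β ω₀ Cg2 (3 + C1) |Cg| τ hγ hβ hτ hCg2.le (by positivity) (abs_nonneg _)
  set κ := 1 / Real.pi * Real.exp (-2) * Cφ1 * min 1 (5 ^ (-(a / 2))) with hκ
  have hκ0 : 0 < κ := by
    have : (0 : ℝ) < min 1 (5 ^ (-(a / 2))) := by positivity
    positivity
  refine ⟨(κ * ε) ^ 2 * (2 / γ) ^ (-((2 * s + 2 * a - 1) / β)) / 8, by positivity, N, fun n hn T hT => ?_⟩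
  obtain ⟨hn2, hNM⟩ := hN n hn
  obtain ⟨M, hMdef⟩ : ∃ M : ℝ, M = (2 / γ * Real.log n) ^ (1 / β) := ⟨_, rfl⟩
  obtain ⟨hM1, hMω, hMn⟩ := hNM M hMdef
  have hM0 : 0 < M := by linarith
  have hl0 : 0 ≤ Real.log n := Real.log_natCast_nonneg n
  obtain ⟨δ, hδ⟩ : ∃ δ : ℝ, δ = ε * M ^ (-s - 1 / 2) := ⟨_, rfl⟩
  have hδ0 : 0 < δ := by rw [hδ]; positivity
  have hδ1 : δ ≤ 1 := by
    have h1 : M ^ (-s - 1 / 2) ≤ 1 := Real.rpow_le_one_of_one_le_of_nonpos hM1 (by linarith)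
    rw [hδ]; nlinarith [Real.rpow_pos_of_pos hM0 (-s - 1 / 2)]
  have hδM : √M * δ ≤ ε := by
    have h1 : √M * M ^ (-s - 1 / 2) ≤ 1 := by
      rw [Real.sqrt_eq_rpow, ← Real.rpow_add hM0]
      exact Real.rpow_le_one_of_one_le_of_nonpos hM1 (by linarith)
    rw [hδ]; nlinarith
  have hδM2 : M ^ (2 * s) * (M * δ ^ 2) = ε ^ 2 := by
    have h1 : M ^ (2 * s) * (M * (M ^ (-s - 1 / 2)) ^ 2) = 1 := by
      rw [← Real.rpow_natCast (M ^ (-s - 1 / 2)), ← Real.rpow_mul hM0.le]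
      nth_rw 2 [← Real.rpow_one M]
      rw [← Real.rpow_add hM0, ← Real.rpow_add hM0]
      convert Real.rpow_zero M using 2
      push_cast; ring
    rw [hδ, mul_pow]; linear_combination ε ^ 2 * h1
  obtain ⟨u, u', χ, hu, hu0, hub, hub', hχ0, hχ1, hχc, hχI, hχz, huχ⟩ := hbump M δ hM1 hMω hδ0
  obtain ⟨b1, b2, b3, b4, b5⟩ := bump_fourier u u' M δ (δ * C1) hM0 hδ0 (by positivity) hu hu0 hub hub'
  have huc : Continuous u := continuous_iff_continuousAt.2 fun x => (hu x).continuousAt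
  have hFc : Continuous (𝓕 u) :=
    VectorFourier.fourierIntegral_continuous Real.continuous_fourierChar (by exact continuous_inner) b1
  obtain ⟨k1, k2⟩ := kk_facts u b2
  obtain ⟨k3, k4⟩ := kk_sq u hFc b4
  have hkft := ft_kk u huc b1 b2
  have hk0 : ∫ x, kk u x = 0 := by
    have h1 := hkft 0
    have h2 : u 0 = 0 := hu0 0 (fun h => by linarith [h.1])
    rw [neg_zero, h2, map_zero, add_zero] at h1
    unfold ft at h1
    simp only [Complex.ofReal_zero, mul_zero, zero_mul, Complex.exp_zero, one_mul] at h1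
    rw [integral_complex_ofReal] at h1
    exact_mod_cast h1
  have hkm : ∫ x, |kk u x| ≤ 1 := by
    nlinarith
  have hk2 : 16 * Real.pi * Cs * M ^ (2 * s) * ∫ x, kk u x ^ 2 ≤ B ^ 2 / 2 := by
    have h1 : ∫ x, kk u x ^ 2 ≤ 2 / Real.pi * (M * δ ^ 2) :=
      k4.trans (mul_le_mul_of_nonneg_left b5 (by positivity))
    calc _ ≤ 16 * Real.pi * Cs * M ^ (2 * s) * (2 / Real.pi * (M * δ ^ 2)) := by gcongr
      _ = 32 * Cs * (M ^ (2 * s) * (M * δ ^ 2)) := by field_simp; ring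
      _ ≤ _ := by rw [hδM2]; linarith
  obtain ⟨w, hwM⟩ : ∃ w : NNReal, (w : ℝ) = (M ^ 2)⁻¹ := ⟨⟨(M ^ 2)⁻¹, by positivity⟩, rfl⟩
  have hw0 : w ≠ 0 := by
    intro h; rw [h] at hwM
    have h1 : 0 < (M ^ 2)⁻¹ := by positivity
    rw [← hwM] at h1; simp at h1
  have hΨ : ∀ ω, ft (ProbabilityTheory.gaussianPDFReal 0 w) ω = (Real.exp (-(ω ^ 2 / M ^ 2 / 2)) : ℝ) := by
    intro ω
    rw [ft_gauss w hw0, hwM]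
    congr 3; ring
  have hΨi := ProbabilityTheory.integrable_gaussianPDFReal 0 w
  obtain ⟨f, hf⟩ : ∃ f : ℝ → ℝ → ℝ, f = fun σ x => (1 - ∫ x, |kk u x|) * ProbabilityTheory.gaussianPDFReal 0 v x +
      ∫ θ, ProbabilityTheory.gaussianPDFReal 0 w (x - θ) * (|kk u θ| + σ * kk u θ) := ⟨_, rfl⟩
  have hdens := fun σ hσ => dens s B M Cs hM1 hCs (fun ω => hw M ω hM1) v hv hvi hvb (kk u) k1 k3 hk0 hkm σ hσ
    w hwM (f σ) (by rw [hf])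
  have hint : ∀ σ, (σ = 1 ∨ σ = -1) → Integrable (fun ω : ℝ => ‖ft (f σ) ω‖ * ‖ft φ ω‖) := by
    intro σ hσ
    refine (hdens σ hσ).2.2.2.2.2.mul_bdd (c := ∫ x, |φ x|) (by fun_prop) (Filter.Eventually.of_forall fun ω => ?_)
    rw [norm_norm]; exact ft_norm_le φ ω
  have hint2 : ∀ σ, (σ = 1 ∨ σ = -1) → Integrable (fun ω : ℝ => ft (f σ) ω * ft φ (-ω)) := by
    intro σ hσ
    have hc := ft_continuous _ (hdens σ hσ).2.1
    refine (hint σ hσ).mono' (by fun_prop) (Filter.Eventually.of_forall fun ω => ?_)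
    rw [norm_mul, ft_neg, RCLike.norm_conj]
  obtain ⟨p0, p1, p2, p3, p4, p5⟩ := hdens 1 (Or.inl rfl)
  obtain ⟨m0, m1, m2, m3, m4, m5⟩ := hdens (-1) (Or.inr rfl)
  obtain ⟨μ, hμ⟩ : ∃ μ : ℝ, μ = (n : ℝ) ^ (ν - 1) := ⟨_, rfl⟩
  have hμ0 : 0 ≤ μ := by rw [hμ]; positivity
  have hμ1 : μ ≤ 1 := by
    rw [hμ]
    exact Real.rpow_le_one_of_one_le_of_nonpos (by exact_mod_cast (by omega : 1 ≤ n)) (by linarith)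
  obtain ⟨qp0, qp1, qp2⟩ := q_facts g (f 1) hg_nonneg hg_int hg_one p0 p1 p2 μ hμ0 hμ1
  obtain ⟨qm0, qm1, qm2⟩ := q_facts g (f (-1)) hg_nonneg hg_int hg_one m0 m1 m2 μ hμ0 hμ1
  obtain ⟨pb1, pb2⟩ := prod_bump g Cg2 α γ β hCg2 hα hγ hβ hgup Cg τ hτ gd hgd hgd_bdd
    (ProbabilityTheory.gaussianPDFReal 0 w) M δ C1 hM1 hδ0 hC1 hΨ u u' hu hu0 hub hub'
  have hΨc := ft_continuous _ hΨi
  have huΨ : Integrable (fun ω => u ω * ft (ProbabilityTheory.gaussianPDFReal 0 w) ω) := by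
    refine b1.mul_bdd (c := ∫ x, |ProbabilityTheory.gaussianPDFReal 0 w x|) (by fun_prop)
      (Filter.Eventually.of_forall fun ω => ft_norm_le _ ω)
  have hL1 := diff_L1 g _ (ProbabilityTheory.gaussianPDFReal 0 v) hg_int hΨi (∫ x, |kk u x|) μ hμ0 hμ1 u b1 b2 huΨ pb1
    (f 1) (f (-1)) p1 m1 (by rw [hf]) (by rw [hf])
  have hn0 : (0 : ℝ) ≤ n := by positivity
  have hTV : n * ∫ y, |((1 - μ) * g y + μ * ∫ θ, g (y - θ) * f 1 θ) - ((1 - μ) * g y + μ * ∫ θ, g (y - θ) * f (-1) θ)|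
      ≤ 1 / 2 := by
    refine le_trans (mul_le_mul_of_nonneg_left (hL1.trans (mul_le_mul_of_nonneg_left pb2 (by norm_num))) hn0)
      (le_trans ?_ hMn)
    have : δ * Cg2 ≤ Cg2 := by nlinarith
    gcongr
  have htp := two_point n _ _ qp0 qm0 qp1 qm1 qp2 hTV T hT
    ((1 / (2 * Real.pi) : ℂ) * ∫ ω : ℝ, ft (f 1) ω * ft φ (-ω))
    ((1 / (2 * Real.pi) : ℂ) * ∫ ω : ℝ, ft (f (-1)) ω * ft φ (-ω))
  have hgap := gap φ hφi Cφ1 a hCφ1 hφlow M δ hM1 hδ0 u χ hχ0 hχ1 hχc hχI huχ (ft (f 1)) (ft (f (-1)))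
    (hint2 1 (Or.inl rfl)) (hint2 (-1) (Or.inr rfl)) (fun ω => by
      rw [p3, m3, hkft]; push_cast; ring)
  rw [← hκ] at hgap
  have hsq := pow_le_pow_left₀ (by positivity) hgap 2
  have hrate : (κ * (δ * M ^ (1 - a))) ^ 2 = (κ * ε) ^ 2 * (2 / γ) ^ (-((2 * s + 2 * a - 1) / β)) *
      Real.log n ^ (-((2 * s + 2 * a - 1) / β)) := by
    have h1 : δ * M ^ (1 - a) = ε * M ^ (1 / 2 - s - a) := by
      rw [hδ, mul_assoc, ← Real.rpow_add hM0]; congr 2; ring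
    have h2 : (M ^ (1 / 2 - s - a)) ^ 2 = (2 / γ) ^ (-((2 * s + 2 * a - 1) / β)) *
      Real.log n ^ (-((2 * s + 2 * a - 1) / β)) := by
      rw [← Real.rpow_natCast, ← Real.rpow_mul hM0.le, hMdef, ← Real.rpow_mul (by positivity),
        ← Real.mul_rpow (by positivity) hl0]
      congr 1; push_cast; field_simp; ring
    rw [h1]; linear_combination (κ * ε) ^ 2 * h2
  rw [hrate] at hsq
  have hfin : ENNReal.ofReal ((κ * ε) ^ 2 * (2 / γ) ^ (-((2 * s + 2 * a - 1) / β)) / 8 *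
      Real.log n ^ (-((2 * s + 2 * a - 1) / β))) ≤ ENNReal.ofReal
      (‖((1 / (2 * Real.pi) : ℂ) * ∫ ω : ℝ, ft (f 1) ω * ft φ (-ω)) -
        ((1 / (2 * Real.pi) : ℂ) * ∫ ω : ℝ, ft (f (-1)) ω * ft φ (-ω))‖ ^ 2 / 8) := by
    apply ENNReal.ofReal_le_ofReal; linarith
  rw [← hμ]
  rcases htp with h | h
  · exact ⟨f 1, p0, p1, p2, by linarith, hint 1 (Or.inl rfl), hfin.trans h⟩
  · exact ⟨f (-1), m0, m1, m2, by linarith, hint (-1) (Or.inr rfl), hfin.trans h⟩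
end
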